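/- arXiv:2305.09796 — 2 statements merged into one kernel-verified Lean document; each statement's English description precedes it below -/
import Mathlib

section
/- Let (D,V) be a Dyer system of spherical type, write V_p = {x_1,…,x_k} and V_∞ = {y_1,…,y_l}, and let g ∈ D. Then g ∈ B_∅ if and only if g can be written in the form g = w_0 x_1^{a_1}⋯x_k^{a_k} y_1^{b_1}⋯y_l^{b_l}, where w_0 is the longest element of the finite Coxeter group D_2, a_i ∈ (ℤ/f(x_i)ℤ) ∖ {0} for all i ∈ {1,…,k}, and b_j ∈ ℤ ∖ {0} for all j ∈ {1,…,l}. -/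
/-!
When `Γ` is complete, every generator outside `V₂` is central, so `D` is the direct product of the
Coxeter group `D₂` and of cyclic groups `ℤ / f(v)` for `v ∉ V₂` (with `ℤ / ∞ = ℤ`). The factors
are reached by the homomorphisms `projCox` (onto the abstract Coxeter group on `V₂`, split by
`incl`) and `expo` (onto `ZMod (f v).toNat`, where `ZMod 0 = ℤ` handles `f v = ∞`), and
`exists_normal_form` decomposes an element accordingly.

The syllable length is additive along this decomposition (`sylLength_eq`): it is the Coxeter
length of the `D₂`-component plus the number of nontrivial cyclic components. The lower bound
holds because this quantity is subadditive and at most `1` on powers of generators.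

As `X ↦ A_X` is antitone, `g ∈ B_∅` means that for each vertex `v` some power of `v`
shortens `g` (`mem_Bmin_empty_iff`). For `v ∉ V₂` this says that the `v`-component of `g` is
nontrivial; for `v ∈ V₂` it says that `v` is a right descent of the `D₂`-component `w`.

It remains to see that `w₀` is the only element of `D₂` having every simple reflection as a right
descent (`forall_isRightDescent_iff`). The exchange property (`simple_mem_rightInvSeq`) is obtained
from the action of the Coxeter group on `W × {±1}` by signed conjugation: the parity of the number
of occurrences of `t` in the right inversion sequence of a word depends only on the element
represented. If `w` has full descent set, exchange shows by induction that every reduced word is a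
suffix of a reduced word of `w` (`exists_reduced_suffix`); applied to a reduced word of `w₀`, and
as `w` is no longer than `w₀`, this gives `w = w₀`.
-/

open scoped Classical

/-- The word length of `g` with respect to the alphabet `S ∪ S⁻¹`. -/
noncomputable def wordLength {G : Type*} [Group G] (S : Set G) (g : G) : ℕ :=
  sInf {n | ∃ w : List G, w.length = n ∧ (∀ a ∈ w, a ∈ S ∪ S⁻¹) ∧ w.prod = g}

/-- The syllable length of `g` with respect to `S`. -/
noncomputable def sylLength {G : Type*} [Group G] (S : Set G) (g : G) : ℕ :=
  sInf {n | ∃ w : List (G × ℤ), w.length = n ∧ (∀ p ∈ w, p.1 ∈ S) ∧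
    (w.map fun p => p.1 ^ p.2).prod = g}

/-- The growth series of a subset `A` of a group `G` with respect to a generating set `S`:
the coefficient of `t^n` is the number of elements of `A` of word length `n`. -/
noncomputable def growthSeries {G : Type*} [Group G] (S : Set G) (A : Set G) :
    PowerSeries ℤ :=
  PowerSeries.mk fun n => (Set.ncard {g ∈ A | wordLength S g = n} : ℤ)

/-- A Dyer graph. -/
structure DyerGraph (V : Type*) where
  Adj : V → V → Prop
  symm : ∀ {x y}, Adj x y → Adj y x
  loopless : ∀ x, ¬ Adj x x
  m : V → V → ℕ
  m_symm : ∀ x y, m x y = m y x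
  m_ge : ∀ {x y}, Adj x y → 2 ≤ m x y
  f : V → ℕ∞
  f_ge : ∀ x, 2 ≤ f x
  compat : ∀ {x y}, Adj x y → m x y ≠ 2 → f x = 2 ∧ f y = 2

namespace DyerGraph

variable {V : Type*} (Γ : DyerGraph V)

/-- The alternating word `π(x, y, n) = xyxy⋯` of length `n` in the free group. -/
def altWord (x y : V) : ℕ → FreeGroup V
  | 0 => 1
  | n + 1 => FreeGroup.of x * altWord y x n

/-- The defining relations of the Dyer group. -/
def rels : Set (FreeGroup V) :=
  {r | ∃ x : V, Γ.f x ≠ ⊤ ∧ r = FreeGroup.of x ^ (Γ.f x).toNat} ∪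
  {r | ∃ x y : V, Γ.Adj x y ∧
      r = altWord x y (Γ.m x y) * (altWord y x (Γ.m x y))⁻¹}

/-- The Dyer group associated to a Dyer graph. -/
abbrev DyerGroup := PresentedGroup Γ.rels

/-- The standard generator of the Dyer group corresponding to a vertex. -/
def gen (x : V) : Γ.DyerGroup := PresentedGroup.of x

/-- The standard parabolic subgroup generated by `X ⊆ V`. -/
def parabolic (X : Set V) : Subgroup Γ.DyerGroup := Subgroup.closure (Γ.gen '' X)

/-- The set of vertices with `f x = 2`. -/
def V2 : Set V := {x | Γ.f x = 2}

/-- The set of vertices with `2 < f x < ∞`. -/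
def Vp : Set V := {x | 2 < Γ.f x ∧ Γ.f x ≠ ⊤}

/-- The set of vertices with `f x = ∞`. -/
def Vinf : Set V := {x | Γ.f x = ⊤}

/-- A Dyer group is of spherical type if the graph is complete and `D_2` is finite. -/
def Spherical : Prop :=
  (∀ x y : V, x ≠ y → Γ.Adj x y) ∧ (Γ.parabolic Γ.V2 : Set Γ.DyerGroup).Finite

/-- The set `A_X` of `X`-minimal elements. -/
def Amin (X : Set V) : Set Γ.DyerGroup :=
  {g | ∀ h ∈ Γ.parabolic X,
    sylLength (Set.range Γ.gen) g ≤ sylLength (Set.range Γ.gen) (g * h)}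

/-- The set `B_X = A_X ∖ ⋃_{X ⊊ Y} A_Y`. -/
def Bmin (X : Set V) : Set Γ.DyerGroup :=
  Γ.Amin X \ ⋃ (Y : Set V) (_ : X ⊂ Y), Γ.Amin Y

end DyerGraph

/-! ### The exchange property and elements with full descent set -/

namespace DyerSpherical

section Coxeter

variable {B W : Type*} [Group W] {M : CoxeterMatrix B} (cs : CoxeterSystem M W)

/-- The involution of `W × ZMod 2` attached to a simple reflection `s`: it conjugates the first
coordinate by `s` and flips the sign precisely at `t = s`. The first coordinate ranges over all
of `W` rather than over the reflections only, which makes no difference to the relations. -/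
noncomputable def signedConj (i : B) : Equiv.Perm (W × ZMod 2) :=
  Function.Involutive.toPerm
    (fun p => (cs.simple i * p.1 * cs.simple i, p.2 + if p.1 = cs.simple i then 1 else 0)) (by
      rintro ⟨t, e⟩
      have h : cs.simple i * t * cs.simple i = cs.simple i ↔ t = cs.simple i := by
        constructor
        · intro h
          have := congrArg (fun z => cs.simple i * z * cs.simple i) h
          simpa [mul_assoc] using this
        · rintro rfl; simp
      simp only [h, Prod.mk.injEq]
      refine ⟨by simp [mul_assoc], ?_⟩
      rw [add_assoc, CharTwo.add_self_eq_zero, add_zero])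

lemma signedConj_apply (i : B) (t : W) (e : ZMod 2) :
    signedConj cs i (t, e) =
      (cs.simple i * t * cs.simple i, e + if t = cs.simple i then 1 else 0) := rfl

/-- With `r = sᵢ sⱼ`, the `n`-th power of the product of two signed conjugations flips the sign
at `t` once for each `l < 2n` such that `t = r⁻ˡ sⱼ`. -/
lemma signedConj_mul_pow_apply (i j : B) (n : ℕ) (t : W) (e : ZMod 2) :
    ((signedConj cs i * signedConj cs j) ^ n) (t, e) =
      ((cs.simple i * cs.simple j) ^ n * t * ((cs.simple i * cs.simple j) ^ n)⁻¹,
        e + ∑ l ∈ Finset.range (2 * n),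
          if t = ((cs.simple i * cs.simple j)⁻¹) ^ l * cs.simple j then 1 else 0) := by
  induction n with
  | zero => simp
  | succ n ih =>
    rw [pow_succ', Equiv.Perm.mul_apply, ih, Equiv.Perm.mul_apply, signedConj_apply,
      signedConj_apply]
    set r := cs.simple i * cs.simple j with hr
    have hrinv : r⁻¹ = cs.simple j * cs.simple i := by simp [hr]
    have hconj : ∀ k : ℕ, cs.simple j * r ^ k = r⁻¹ ^ k * cs.simple j := by
      intro k
      induction k with
      | zero => simp
      | succ k ih => rw [pow_succ, ← mul_assoc, ih, pow_succ, mul_assoc, mul_assoc, hrinv]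
                     simp [hr, mul_assoc]
    -- Conjugation by `r ^ n` inverts powers of `r` past `sⱼ`, so `r⁻ⁿ sⱼ rⁿ = r⁻²ⁿ sⱼ`.
    have h1 : r ^ n * t * (r ^ n)⁻¹ = cs.simple j ↔ t = r⁻¹ ^ (2 * n) * cs.simple j := by
      rw [mul_inv_eq_iff_eq_mul, hconj, ← eq_inv_mul_iff_mul_eq, ← inv_pow, ← mul_assoc,
        ← pow_add, two_mul]
    have h2 : cs.simple j * (r ^ n * t * (r ^ n)⁻¹) * cs.simple j = cs.simple i ↔
        t = r⁻¹ ^ (2 * n + 1) * cs.simple j := by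
      have : cs.simple j * (r ^ n * t * (r ^ n)⁻¹) * cs.simple j = cs.simple i ↔
          r ^ n * t * (r ^ n)⁻¹ = r⁻¹ * cs.simple j := by
        rw [hrinv]
        constructor
        · intro h
          rw [← h]; simp [mul_assoc]
        · intro h; rw [h]; simp [mul_assoc]
      rw [this, mul_inv_eq_iff_eq_mul, mul_assoc, hconj, ← eq_inv_mul_iff_mul_eq, ← inv_pow,
        ← mul_assoc, ← mul_assoc, ← pow_succ, ← pow_add]
      rw [show n + 1 + n = 2 * n + 1 by ring]
    rw [show 2 * (n + 1) = 2 * n + 1 + 1 by ring, Finset.sum_range_succ, Finset.sum_range_succ]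
    simp only [h1, h2, Prod.mk.injEq]
    refine ⟨?_, by ring⟩
    rw [pow_succ' r n, mul_inv_rev, hrinv, hr]
    simp [mul_assoc]

lemma signedConj_isLiftable : M.IsLiftable (signedConj cs) := by
  intro i j
  ext1 ⟨t, e⟩
  rw [signedConj_mul_pow_apply, two_mul, Finset.sum_range_add]
  have hr : (cs.simple i * cs.simple j) ^ M i j = 1 := cs.simple_mul_simple_pow i j
  have hri : ((cs.simple i * cs.simple j)⁻¹) ^ M i j = 1 := by rw [inv_pow, hr, inv_one]
  simp only [pow_add, hri, one_mul, hr, CharTwo.add_self_eq_zero]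
  simp

/-- The action of `W` on `W × ZMod 2` by signed conjugation. -/
noncomputable def signedAction : W →* Equiv.Perm (W × ZMod 2) :=
  cs.lift ⟨signedConj cs, signedConj_isLiftable cs⟩

/-- The sign change of `w` at `t` is the parity of the number of occurrences of `t` in the right
inversion sequence of any word for `w`; in particular this parity depends only on `w`. -/
lemma signedAction_wordProd (ω : List B) (t : W) (e : ZMod 2) :
    signedAction cs (cs.wordProd ω) (t, e) =
      (cs.wordProd ω * t * (cs.wordProd ω)⁻¹, e + ((cs.rightInvSeq ω).count t : ZMod 2)) := by
  induction ω with
  | nil => simp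
  | cons i ω ih =>
    rw [cs.wordProd_cons, map_mul, Equiv.Perm.mul_apply, ih]
    have : signedAction cs (cs.simple i) = signedConj cs i := by
      simp [signedAction]
    rw [this, signedConj_apply, CoxeterSystem.rightInvSeq, List.count_cons]
    have h1 : cs.wordProd ω * t * (cs.wordProd ω)⁻¹ = cs.simple i ↔
        (cs.wordProd ω)⁻¹ * cs.simple i * cs.wordProd ω = t := by
      constructor
      · intro h; rw [← h]; group
      · intro h; rw [← h]; group
    simp only [h1, beq_iff_eq, Prod.mk.injEq]
    refine ⟨by simp [mul_assoc], ?_⟩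
    push_cast
    ring

/-- The exchange property: a right descent of `w` occurs in the right inversion sequence of
every word for `w`. -/
lemma simple_mem_rightInvSeq (ω : List B) (i : B)
    (h : cs.IsRightDescent (cs.wordProd ω) i) : cs.simple i ∈ cs.rightInvSeq ω := by
  obtain ⟨ω', hred, hω'⟩ := cs.exists_isReduced (cs.wordProd ω * cs.simple i)
  have hnot : cs.simple i ∉ cs.rightInvSeq ω' := by
    intro hm
    have := (cs.isRightInversion_of_mem_rightInvSeq hred hm).2
    rw [← hω', cs.simple_mul_simple_cancel_right] at this
    exact absurd h (not_lt.mpr this.le)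
  have hw : cs.wordProd ω = cs.wordProd ω' * cs.simple i := by
    rw [← hω', cs.simple_mul_simple_cancel_right]
  have e1 := signedAction_wordProd cs ω (cs.simple i) 0
  have e2 := signedAction_wordProd cs (ω'.concat i) (cs.simple i) 0
  rw [cs.wordProd_concat, ← hw, e1] at e2
  have e3 := congrArg Prod.snd e2
  simp only [zero_add] at e3
  rw [cs.rightInvSeq_concat] at e3
  have hc : (List.map (MulAut.conj (cs.simple i)) (cs.rightInvSeq ω')).count (cs.simple i) = 0 := by
    rw [List.count_eq_zero]
    intro hm
    obtain ⟨t, ht, hte⟩ := List.mem_map.mp hm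
    have : t = cs.simple i := by
      have := congrArg (fun z => cs.simple i * z * cs.simple i) hte
      simpa [mul_assoc] using this
    exact hnot (this ▸ ht)
  rw [List.concat_eq_append, List.count_append, hc] at e3
  by_contra hm
  rw [List.count_eq_zero.mpr hm] at e3
  simp at e3

/-- If every simple reflection is a right descent of `w`, then every reduced word is a suffix of
a reduced word for `w`. -/
lemma exists_reduced_suffix {w : W} (hw : ∀ i, cs.IsRightDescent w i) (ω : List B)
    (hω : cs.IsReduced ω) : ∃ ν : List B, w = cs.wordProd (ν ++ ω) ∧ cs.IsReduced (ν ++ ω) := by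
  induction ω using List.reverseRecOn with
  | nil =>
    obtain ⟨ν, h1, h2⟩ := cs.exists_isReduced w
    exact ⟨ν, by simpa using h2, by simpa using h1⟩
  | append_singleton ω i ih =>
    have hω' : cs.IsReduced ω := by
      have := hω.take ω.length
      simpa using this
    obtain ⟨ν, hν, hred⟩ := ih hω'
    have hm := simple_mem_rightInvSeq cs (ν ++ ω) i (hν ▸ hw i)
    obtain ⟨j, hj, hje⟩ := List.mem_iff_getElem.mp hm
    have herase := cs.wordProd_mul_getD_rightInvSeq (ν ++ ω) j
    rw [List.getD_eq_getElem _ 1 hj, hje] at herase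
    rw [cs.length_rightInvSeq, List.length_append] at hj
    by_cases hjν : j < ν.length
    · rw [List.eraseIdx_append_of_lt_length hjν] at herase
      have hw' : w = cs.wordProd (ν.eraseIdx j ++ (ω ++ [i])) := by
        rw [← List.append_assoc, cs.wordProd_append, ← herase, hν]
        simp
      refine ⟨ν.eraseIdx j, hw', ?_⟩
      unfold CoxeterSystem.IsReduced
      rw [← hw', hν, hred.eq]
      have := List.length_eraseIdx_add_one hjν
      simp only [List.length_append, List.length_singleton]
      omega
    · exfalso
      rw [List.eraseIdx_append_of_length_le (not_lt.mp hjν), cs.wordProd_append,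
        cs.wordProd_append, mul_assoc, mul_right_inj] at herase
      have h1 := hω.eq
      rw [cs.wordProd_append, cs.wordProd_singleton, herase] at h1
      have h2 := cs.length_wordProd_le (ω.eraseIdx (j - ν.length))
      have h3 := List.length_eraseIdx_add_one (l := ω) (i := j - ν.length) (by omega)
      simp only [List.length_append, List.length_singleton] at h1
      omega

/-- If `w₀` has maximal length, then it is the only element having every simple reflection
as a right descent. -/
lemma forall_isRightDescent_iff {w₀ : W} (hmax : ∀ w, cs.length w ≤ cs.length w₀) (w : W) :
    (∀ i, cs.IsRightDescent w i) ↔ w = w₀ := by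
  constructor
  · intro hw
    obtain ⟨ω, hω, hω₀⟩ := cs.exists_isReduced w₀
    obtain ⟨ν, hν, hred⟩ := exists_reduced_suffix cs hw ω hω
    have h1 := hmax w
    rw [hν, hred.eq, hω₀, hω.eq, List.length_append] at h1
    have : ν = [] := List.length_eq_zero_iff.mp (by omega)
    rw [hν, hω₀, this, List.nil_append]
  · rintro rfl i
    exact lt_of_le_of_ne (hmax _) (cs.length_mul_simple_ne w i)

end Coxeter

/-! ### The projections and the section of a Dyer group with complete graph -/

section Dyer

variable {V : Type*} (Γ : DyerGraph V)

/-- For involutions, the braid relator `π(a, b, n) π(b, a, n)⁻¹` is the Coxeter relator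
`(a b)ⁿ`. -/
lemma map_altWord_relator {G : Type*} [Group G] (F : FreeGroup V →* G) (n : ℕ) (x y : V)
    (hx : F (FreeGroup.of x) * F (FreeGroup.of x) = 1)
    (hy : F (FreeGroup.of y) * F (FreeGroup.of y) = 1) :
    F (DyerGraph.altWord x y n) * (F (DyerGraph.altWord y x n))⁻¹ =
      (F (FreeGroup.of x) * F (FreeGroup.of y)) ^ n := by
  induction n generalizing x y with
  | zero => simp [DyerGraph.altWord]
  | succ n ih =>
    have hy' : (F (FreeGroup.of y))⁻¹ = F (FreeGroup.of y) := inv_eq_of_mul_eq_one_left hy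
    rw [DyerGraph.altWord, DyerGraph.altWord, map_mul, map_mul, mul_inv_rev, hy']
    have := ih y x hy hx
    calc _ = F (FreeGroup.of x) * (F (DyerGraph.altWord y x n) *
              (F (DyerGraph.altWord x y n))⁻¹) * F (FreeGroup.of y) := by simp only [mul_assoc]
      _ = _ := by
        rw [this]
        generalize F (FreeGroup.of x) = a
        generalize F (FreeGroup.of y) = b
        have h : a * (b * a) ^ n = (a * b) ^ n * a := by
          clear this ih
          induction n with
          | zero => simp
          | succ k ihk => rw [pow_succ, ← mul_assoc, ihk, pow_succ]; simp only [mul_assoc]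
        rw [h, pow_succ, mul_assoc]

lemma map_altWord_two {G : Type*} [Group G] (F : FreeGroup V →* G) (x y : V) :
    F (DyerGraph.altWord x y 2) = F (FreeGroup.of x) * F (FreeGroup.of y) := by
  simp [DyerGraph.altWord]

lemma gen_pow (x : V) (hx : Γ.f x ≠ ⊤) : Γ.gen x ^ (Γ.f x).toNat = 1 := by
  have : FreeGroup.of x ^ (Γ.f x).toNat ∈ Γ.rels := Or.inl ⟨x, hx, rfl⟩
  have := PresentedGroup.one_of_mem this
  rwa [map_pow] at this

lemma gen_mul_self {x : V} (hx : Γ.f x = 2) : Γ.gen x * Γ.gen x = 1 := by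
  have := gen_pow Γ x (by simp [hx])
  rwa [hx, show (2 : ℕ∞).toNat = 2 from rfl, pow_two] at this

lemma mk_altWord_eq {x y : V} (h : Γ.Adj x y) :
    PresentedGroup.mk Γ.rels (DyerGraph.altWord x y (Γ.m x y)) =
      PresentedGroup.mk Γ.rels (DyerGraph.altWord y x (Γ.m x y)) :=
  PresentedGroup.mk_eq_mk_of_mul_inv_mem (Or.inr ⟨x, y, h, rfl⟩)

lemma commute_gen (h : ∀ x y : V, x ≠ y → Γ.Adj x y) {x : V} (hx : Γ.f x ≠ 2) (y : V) :
    Commute (Γ.gen x) (Γ.gen y) := by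
  by_cases hxy : x = y
  · rw [hxy]
  have hadj := h x y hxy
  have hm : Γ.m x y = 2 := by
    by_contra hm
    exact hx (Γ.compat hadj hm).1
  have := mk_altWord_eq Γ hadj
  rw [hm, map_altWord_two, map_altWord_two] at this
  exact this

lemma gen_mem_center (h : ∀ x y : V, x ≠ y → Γ.Adj x y) {x : V} (hx : Γ.f x ≠ 2) :
    Γ.gen x ∈ Subgroup.center Γ.DyerGroup := by
  rw [Subgroup.mem_center_iff]
  intro g
  have : g ∈ Subgroup.closure (Set.range (PresentedGroup.of (rels := Γ.rels))) := by
    rw [PresentedGroup.closure_range_of]; trivial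
  induction this using Subgroup.closure_induction with
  | mem z hz => obtain ⟨y, rfl⟩ := hz; exact (commute_gen Γ h hx y).symm
  | one => simp
  | mul a b _ _ ha hb => exact (Commute.mul_left (a := a) (b := b) (c := Γ.gen x) ha hb)
  | inv a _ ha => exact Commute.inv_left (a := a) (b := Γ.gen x) ha

/-- The Coxeter matrix on `V₂` of a Dyer graph whose graph is complete. -/
noncomputable def coxMatrix (h : ∀ x y : V, x ≠ y → Γ.Adj x y) :
    CoxeterMatrix {x : V // Γ.f x = 2} where
  M := Matrix.of fun x y => if x = y then 1 else Γ.m x y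
  isSymm := by
    ext x y
    simp [Matrix.transpose_apply, Γ.m_symm x y, eq_comm]
  diagonal := by simp
  off_diagonal := by
    intro x y hxy
    have := Γ.m_ge (h x y (fun e => hxy (Subtype.ext e)))
    simp only [Matrix.of_apply, hxy, if_false]
    omega

variable {Γ} (h : ∀ x y : V, x ≠ y → Γ.Adj x y)

lemma coxMatrix_apply {x y : {x : V // Γ.f x = 2}} (hxy : x ≠ y) :
    coxMatrix Γ h x y = Γ.m x y := by
  change (if x = y then 1 else Γ.m x y) = _
  simp [hxy]

/-- The Coxeter system on the abstract Coxeter group with generating set `V₂`. -/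
noncomputable abbrev cox : CoxeterSystem (coxMatrix Γ h) (coxMatrix Γ h).Group :=
  (coxMatrix Γ h).toCoxeterSystem

lemma gen_isLiftable :
    (coxMatrix Γ h).IsLiftable (fun x : {x : V // Γ.f x = 2} => Γ.gen x) := by
  intro x y
  have hx := gen_mul_self Γ x.2
  have hy := gen_mul_self Γ y.2
  by_cases hxy : x = y
  · subst hxy; simp [hx]
  · rw [coxMatrix_apply h hxy]
    have := map_altWord_relator (PresentedGroup.mk Γ.rels) (Γ.m x y) x y hx hy
    rw [mk_altWord_eq Γ (h x y fun e => hxy (Subtype.ext e)), mul_inv_cancel] at this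
    exact this.symm

/-- The homomorphism from the abstract Coxeter group on `V₂` to the Dyer group. -/
noncomputable def incl : (coxMatrix Γ h).Group →* Γ.DyerGroup :=
  (cox h).lift ⟨_, gen_isLiftable h⟩

lemma incl_simple (x : {x : V // Γ.f x = 2}) : incl h ((cox h).simple x) = Γ.gen x :=
  (cox h).lift_apply_simple (gen_isLiftable h) x

/-- The projection of the Dyer group to the abstract Coxeter group on `V₂`, killing the other
generators. -/
noncomputable def projCox : Γ.DyerGroup →* (coxMatrix Γ h).Group :=
  PresentedGroup.toGroup
    (f := fun x => if hx : Γ.f x = 2 then (cox h).simple ⟨x, hx⟩ else 1) (by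
    rintro r (⟨x, hx, rfl⟩ | ⟨x, y, hadj, rfl⟩)
    · rw [map_pow, FreeGroup.lift_apply_of]
      by_cases h2 : Γ.f x = 2
      · rw [dif_pos h2, h2]
        exact (cox h).simple_sq _
      · simp [h2]
    · by_cases h2 : Γ.f x = 2 ∧ Γ.f y = 2
      · rw [map_mul, map_inv, map_altWord_relator]
        · have hne : (⟨x, h2.1⟩ : {x : V // Γ.f x = 2}) ≠ ⟨y, h2.2⟩ := by
            intro e
            have : x = y := congrArg Subtype.val e
            exact Γ.loopless x (this ▸ hadj)
          have := (cox h).simple_mul_simple_pow ⟨x, h2.1⟩ ⟨y, h2.2⟩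
          rw [coxMatrix_apply h hne] at this
          simpa only [FreeGroup.lift_apply_of, dif_pos h2.1, dif_pos h2.2] using this
        · rw [FreeGroup.lift_apply_of, dif_pos h2.1]
          exact (cox h).simple_mul_simple_self _
        · rw [FreeGroup.lift_apply_of, dif_pos h2.2]
          exact (cox h).simple_mul_simple_self _
      · have hm : Γ.m x y = 2 := by
          by_contra hm
          exact h2 (Γ.compat hadj hm)
        rw [map_mul, map_inv, hm, map_altWord_two, map_altWord_two, mul_inv_eq_one]
        simp only [FreeGroup.lift_apply_of]
        rcases not_and_or.mp h2 with h3 | h3 <;> simp [h3])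

lemma projCox_gen {x : V} (hx : Γ.f x = 2) :
    projCox h (Γ.gen x) = (cox h).simple ⟨x, hx⟩ := by
  rw [projCox, DyerGraph.gen, PresentedGroup.toGroup.of, dif_pos hx]

lemma projCox_gen_of_ne {x : V} (hx : Γ.f x ≠ 2) : projCox h (Γ.gen x) = 1 := by
  rw [projCox, DyerGraph.gen, PresentedGroup.toGroup.of, dif_neg hx]

lemma projCox_incl (w : (coxMatrix Γ h).Group) : projCox h (incl h w) = w := by
  have : (projCox h).comp (incl h) = MonoidHom.id _ := by
    apply (cox h).ext_simple
    intro x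
    rw [MonoidHom.comp_apply, incl_simple, projCox_gen h x.2]
    rfl
  exact DFunLike.congr_fun this w

/-- The exponent of a generator `v ∉ V₂`, a homomorphism to `ℤ / f(v)`. When `f v = ∞` one has
`(f v).toNat = 0` and `ZMod 0 = ℤ`, so this covers finite and infinite order uniformly. -/
noncomputable def expo {v : V} (hv : Γ.f v ≠ 2) :
    Γ.DyerGroup →* Multiplicative (ZMod (Γ.f v).toNat) :=
  PresentedGroup.toGroup (f := fun x => if x = v then Multiplicative.ofAdd 1 else 1) (by
    rintro r (⟨x, hx, rfl⟩ | ⟨x, y, hadj, rfl⟩)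
    · rw [map_pow, FreeGroup.lift_apply_of]
      by_cases hxv : x = v
      · subst hxv
        rw [if_pos rfl, ← ofAdd_nsmul]
        simp
      · simp [hxv]
    · by_cases hm : Γ.m x y = 2
      · rw [map_mul, map_inv, hm, map_altWord_two, map_altWord_two, mul_inv_eq_one, mul_comm]
      · obtain ⟨h1, h2⟩ := Γ.compat hadj hm
        have hx : x ≠ v := fun e => hv (e ▸ h1)
        have hy : y ≠ v := fun e => hv (e ▸ h2)
        rw [map_mul, map_inv, map_altWord_relator] <;>
          simp only [FreeGroup.lift_apply_of, if_neg hx, if_neg hy, mul_one, one_pow])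

lemma expo_gen_self {v : V} (hv : Γ.f v ≠ 2) : expo hv (Γ.gen v) = Multiplicative.ofAdd 1 := by
  rw [expo, DyerGraph.gen, PresentedGroup.toGroup.of, if_pos rfl]

lemma expo_gen_of_ne {v : V} (hv : Γ.f v ≠ 2) {x : V} (hx : x ≠ v) :
    expo hv (Γ.gen x) = 1 := by
  rw [expo, DyerGraph.gen, PresentedGroup.toGroup.of, if_neg hx]

lemma expo_gen_zpow {v : V} (hv : Γ.f v ≠ 2) (k : ℤ) :
    expo hv (Γ.gen v ^ k) = Multiplicative.ofAdd (k : ZMod (Γ.f v).toNat) := by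
  rw [map_zpow, expo_gen_self, ← ofAdd_zsmul]
  simp

lemma expo_incl {v : V} (hv : Γ.f v ≠ 2) (w : (coxMatrix Γ h).Group) :
    expo hv (incl h w) = 1 := by
  have : (expo hv).comp (incl h) = 1 := by
    apply (cox h).ext_simple
    intro x
    rw [MonoidHom.comp_apply, incl_simple, expo_gen_of_ne]
    · rfl
    · intro e; exact hv (e ▸ x.2)
  exact DFunLike.congr_fun this w

lemma gen_zpow_eq_one {v : V} {k : ℤ} (hk : (k : ZMod (Γ.f v).toNat) = 0) : Γ.gen v ^ k = 1 := by
  rw [ZMod.intCast_zmod_eq_zero_iff_dvd] at hk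
  obtain ⟨n, rfl⟩ := hk
  rw [zpow_mul, zpow_natCast]
  by_cases hv : Γ.f v = ⊤
  · simp [hv]
  · rw [gen_pow Γ v hv, one_zpow]

lemma parabolic_V2_eq : Γ.parabolic Γ.V2 = (incl h).range := by
  apply le_antisymm
  · rw [DyerGraph.parabolic, Subgroup.closure_le]
    rintro _ ⟨x, hx, rfl⟩
    exact ⟨(cox h).simple ⟨x, hx⟩, incl_simple h _⟩
  · rintro _ ⟨w, rfl⟩
    induction w using (cox h).simple_induction_right with
    | one => rw [map_one]; exact one_mem _
    | mul_simple_right w i ih =>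
      rw [map_mul, incl_simple]
      exact mul_mem ih (Subgroup.subset_closure ⟨i, i.2, rfl⟩)

/-! ### The normal form -/

/-- The product of the powers `v ^ c v` along a list of vertices. -/
noncomputable def powProd (Γ : DyerGraph V) (zs : List V) (c : V → ℤ) : Γ.DyerGroup :=
  (zs.map fun v => Γ.gen v ^ c v).prod

lemma powProd_mem_center (h : ∀ x y : V, x ≠ y → Γ.Adj x y) {zs : List V}
    (hzs : ∀ v ∈ zs, Γ.f v ≠ 2) (c : V → ℤ) :
    powProd Γ zs c ∈ Subgroup.center Γ.DyerGroup := by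
  apply Subgroup.list_prod_mem
  intro z hz
  obtain ⟨v, hv, rfl⟩ := List.mem_map.mp hz
  exact Subgroup.zpow_mem _ (gen_mem_center Γ h (hzs v hv)) _

lemma powProd_add (h : ∀ x y : V, x ≠ y → Γ.Adj x y) {zs : List V}
    (hzs : ∀ v ∈ zs, Γ.f v ≠ 2) (c d : V → ℤ) :
    powProd Γ zs (c + d) = powProd Γ zs c * powProd Γ zs d := by
  induction zs with
  | nil => simp [powProd]
  | cons v zs ih =>
    have ih' := ih (fun x hx => hzs x (List.mem_cons_of_mem _ hx))
    have hc := Subgroup.mem_center_iff.mp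
      (powProd_mem_center h (fun x hx => hzs x (List.mem_cons_of_mem _ hx)) c) (Γ.gen v ^ d v)
    unfold powProd at *
    simp only [List.map_cons, List.prod_cons]
    rw [ih', Pi.add_apply, zpow_add]
    simp only [mul_assoc]
    rw [← mul_assoc (Γ.gen v ^ d v), hc, mul_assoc]

lemma powProd_zero (zs : List V) : powProd Γ zs 0 = 1 := by
  simp [powProd]

lemma powProd_single {zs : List V} (hnd : zs.Nodup) {v : V} (hv : v ∈ zs) :
    powProd Γ zs (Pi.single v 1) = Γ.gen v := by
  rw [powProd, List.prod_map_eq_pow_single v]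
  · rw [List.count_eq_one_of_mem hnd hv]; simp
  · intro x hx _
    simp [Pi.single_eq_of_ne hx]

lemma projCox_powProd {zs : List V} (hzs : ∀ v ∈ zs, Γ.f v ≠ 2) (c : V → ℤ) :
    projCox h (powProd Γ zs c) = 1 := by
  rw [powProd, map_list_prod]
  apply List.prod_eq_one
  intro z hz
  simp only [List.map_map, List.mem_map, Function.comp_apply] at hz
  obtain ⟨v, hv, rfl⟩ := hz
  rw [map_zpow, projCox_gen_of_ne h (hzs v hv), one_zpow]

lemma expo_powProd {zs : List V} (hnd : zs.Nodup) {v : V} (hv : Γ.f v ≠ 2) (hmem : v ∈ zs)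
    (c : V → ℤ) :
    expo hv (powProd Γ zs c) = Multiplicative.ofAdd (c v : ZMod (Γ.f v).toNat) := by
  rw [powProd, map_list_prod, List.map_map, List.prod_map_eq_pow_single v]
  · rw [List.count_eq_one_of_mem hnd hmem, pow_one, Function.comp_apply, expo_gen_zpow]
  · intro x hx _
    rw [Function.comp_apply, map_zpow, expo_gen_of_ne hv hx, one_zpow]

/-- Every element is the product of its Coxeter component and of powers of the central
generators. -/
lemma exists_normal_form {zs : List V} (hnd : zs.Nodup) (hzs : ∀ v, v ∈ zs ↔ Γ.f v ≠ 2)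
    (g : Γ.DyerGroup) : ∃ c : V → ℤ, g = incl h (projCox h g) * powProd Γ zs c := by
  have hz : ∀ v ∈ zs, Γ.f v ≠ 2 := fun v hv => (hzs v).mp hv
  suffices H : ∃ w c, g = incl h w * powProd Γ zs c by
    obtain ⟨w, c, rfl⟩ := H
    exact ⟨c, by rw [map_mul, projCox_incl, projCox_powProd h hz, mul_one]⟩
  have : g ∈ Subgroup.closure (Set.range (PresentedGroup.of (rels := Γ.rels))) := by
    rw [PresentedGroup.closure_range_of]; trivial
  induction this using Subgroup.closure_induction with
  | mem z hz =>
    obtain ⟨y, rfl⟩ := hz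
    by_cases hy : Γ.f y = 2
    · exact ⟨(cox h).simple ⟨y, hy⟩, 0, by rw [powProd_zero, mul_one, incl_simple]; rfl⟩
    · exact ⟨1, Pi.single y 1, by
        rw [powProd_single hnd ((hzs y).mpr hy), map_one, one_mul]; rfl⟩
  | one => exact ⟨1, 0, by rw [powProd_zero, map_one, one_mul]⟩
  | mul a b _ _ ha hb =>
    obtain ⟨w, c, rfl⟩ := ha
    obtain ⟨w', c', rfl⟩ := hb
    refine ⟨w * w', c + c', ?_⟩
    have hc := Subgroup.mem_center_iff.mp (powProd_mem_center h hz c) (incl h w')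
    rw [map_mul, powProd_add h hz]
    simp only [mul_assoc]
    rw [← mul_assoc (powProd Γ zs c), ← hc, mul_assoc]
  | inv a _ ha =>
    obtain ⟨w, c, rfl⟩ := ha
    refine ⟨w⁻¹, -c, ?_⟩
    have hc := Subgroup.mem_center_iff.mp (powProd_mem_center h hz c) (incl h w)
    have hneg : (powProd Γ zs c)⁻¹ = powProd Γ zs (-c) := by
      apply inv_eq_of_mul_eq_one_right
      rw [← powProd_add h hz, add_neg_cancel, powProd_zero]
    rw [hc, mul_inv_rev, hneg, map_inv]

/-! ### The set `B_∅` -/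

/-- Since `X ↦ A_X` is antitone, membership in `B_∅` only has to be tested on singletons. -/
lemma mem_Bmin_empty_iff (g : Γ.DyerGroup) :
    g ∈ Γ.Bmin (∅ : Set V) ↔ ∀ v : V, ∃ k : ℤ,
      sylLength (Set.range Γ.gen) (g * Γ.gen v ^ k) < sylLength (Set.range Γ.gen) g := by
  have hsing : ∀ v (x : Γ.DyerGroup),
      x ∈ Γ.parabolic {v} ↔ ∃ k : ℤ, Γ.gen v ^ k = x := by
    intro v x
    rw [DyerGraph.parabolic, Set.image_singleton, Subgroup.mem_closure_singleton]
  constructor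
  · rintro ⟨_, hg⟩ v
    by_contra! hc
    apply hg
    simp only [Set.mem_iUnion]
    refine ⟨{v}, ?_, ?_⟩
    · rw [Set.empty_ssubset]; exact Set.singleton_nonempty v
    · intro x hx
      obtain ⟨k, rfl⟩ := (hsing v x).mp hx
      exact hc k
  · intro hg
    refine ⟨?_, ?_⟩
    · intro x hx
      have : x = 1 := by
        simpa [DyerGraph.parabolic] using hx
      rw [this, mul_one]
    · simp only [Set.mem_iUnion]
      rintro ⟨Y, hY, hgY⟩
      obtain ⟨v, hv⟩ := Set.empty_ssubset.mp hY
      obtain ⟨k, hk⟩ := hg v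
      have := hgY (Γ.gen v ^ k)
        (Subgroup.zpow_mem _ (Subgroup.subset_closure (Set.mem_image_of_mem _ hv)) k)
      omega

/-! ### Lengths -/

lemma length_simple_zpow_le {B W : Type*} [Group W] {M : CoxeterMatrix B}
    (cs : CoxeterSystem M W) (i : B) (k : ℤ) :
    cs.length (cs.simple i ^ k) ≤ 1 := by
  rcases Int.even_or_odd' k with ⟨n, rfl | rfl⟩
  · rw [zpow_mul, zpow_two, cs.simple_mul_simple_self, one_zpow, cs.length_one]; omega
  · rw [zpow_add, zpow_mul, zpow_two, cs.simple_mul_simple_self, one_zpow, one_mul, zpow_one,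
      cs.length_simple]

lemma length_list_prod_le {B W : Type*} [Group W] {M : CoxeterMatrix B}
    (cs : CoxeterSystem M W) (l : List W) (hl : ∀ a ∈ l, cs.length a ≤ 1) :
    cs.length l.prod ≤ l.length := by
  induction l with
  | nil => simp
  | cons a l ih =>
    have h1 := ih fun b hb => hl b (List.mem_cons_of_mem _ hb)
    have h2 := hl a List.mem_cons_self
    have h3 := cs.length_mul_le a l.prod
    simp only [List.prod_cons, List.length_cons]
    omega

/-- The word length on `D₂` is the Coxeter length. -/
lemma wordLength_incl (w : (coxMatrix Γ h).Group) :
    wordLength (Γ.gen '' Γ.V2) (incl h w) = (cox h).length w := by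
  have hmem : (cox h).length w ∈ {n | ∃ l : List Γ.DyerGroup, l.length = n ∧
      (∀ a ∈ l, a ∈ Γ.gen '' Γ.V2 ∪ (Γ.gen '' Γ.V2)⁻¹) ∧ l.prod = incl h w} := by
    obtain ⟨ω, hω, rfl⟩ := (cox h).exists_isReduced w
    refine ⟨ω.map fun i : {x : V // Γ.f x = 2} => Γ.gen i, by rw [List.length_map, hω.eq], ?_, ?_⟩
    · intro a ha
      obtain ⟨i, _, rfl⟩ := List.mem_map.mp ha
      exact Or.inl ⟨i, i.2, rfl⟩
    · rw [CoxeterSystem.wordProd, map_list_prod, List.map_map]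
      congr 1
  apply le_antisymm
  · exact Nat.sInf_le hmem
  · apply le_csInf ⟨_, hmem⟩
    rintro n ⟨l, rfl, hl, hprod⟩
    have h1 := congrArg (projCox h) hprod
    rw [projCox_incl, map_list_prod] at h1
    rw [← h1]
    refine (length_list_prod_le (cox h) _ ?_).trans (by rw [List.length_map])
    intro a ha
    obtain ⟨b, hb, rfl⟩ := List.mem_map.mp ha
    rcases hl b hb with ⟨x, hx, rfl⟩ | ⟨x, hx, hxb⟩
    · rw [projCox_gen h hx, CoxeterSystem.length_simple]
    · rw [← (cox h).length_inv, ← map_inv, ← hxb, projCox_gen h hx,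
        CoxeterSystem.length_simple]

variable [Fintype V]

/-- The vertices outside `V₂` that occur with nonzero exponent in `g`. -/
noncomputable def expoSupport (g : Γ.DyerGroup) : Finset V :=
  Finset.univ.filter fun v => ∃ hv : Γ.f v ≠ 2, expo hv g ≠ 1

lemma mem_expoSupport {g : Γ.DyerGroup} {v : V} (hv : Γ.f v ≠ 2) :
    v ∈ expoSupport g ↔ expo hv g ≠ 1 := by
  simp [expoSupport, hv]

lemma not_mem_expoSupport {g : Γ.DyerGroup} {v : V} (hv : Γ.f v = 2) :
    v ∉ expoSupport g := by
  simp [expoSupport, hv]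

/-- The Coxeter length of the `D₂`-component plus the number of nontrivial central
components. -/
noncomputable def normLength (g : Γ.DyerGroup) : ℕ :=
  (cox h).length (projCox h g) + (expoSupport g).card

lemma normLength_one : normLength h (1 : Γ.DyerGroup) = 0 := by
  have : expoSupport (1 : Γ.DyerGroup) = ∅ := by
    ext v; simp [expoSupport]
  simp [normLength, this]

lemma normLength_mul_le (a b : Γ.DyerGroup) :
    normLength h (a * b) ≤ normLength h a + normLength h b := by
  have h1 := (cox h).length_mul_le (projCox h a) (projCox h b)
  have h2 : expoSupport (a * b) ⊆ expoSupport a ∪ expoSupport b := by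
    intro v
    by_cases hv : Γ.f v = 2
    · simp [not_mem_expoSupport hv]
    · rw [Finset.mem_union, mem_expoSupport hv, mem_expoSupport hv, mem_expoSupport hv]
      by_contra! hc
      apply hc.1
      rw [map_mul, hc.2.1, hc.2.2, mul_one]
  have h3 := (Finset.card_le_card h2).trans (Finset.card_union_le _ _)
  unfold normLength
  rw [map_mul]
  omega

lemma expoSupport_eq_of_V2 (g : Γ.DyerGroup) {v : V} (hv : Γ.f v = 2) (k : ℤ) :
    expoSupport (g * Γ.gen v ^ k) = expoSupport g := by
  ext x
  by_cases hx : Γ.f x = 2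
  · simp [not_mem_expoSupport hx]
  · rw [mem_expoSupport hx, mem_expoSupport hx, map_mul, map_zpow,
      expo_gen_of_ne hx (fun e => hx (e ▸ hv)), one_zpow, mul_one]

lemma normLength_gen_zpow_le (v : V) (k : ℤ) : normLength h (Γ.gen v ^ k) ≤ 1 := by
  unfold normLength
  by_cases hv : Γ.f v = 2
  · have h0 : expoSupport (1 : Γ.DyerGroup) = ∅ := by
      ext v; simp [expoSupport]
    have h1 := expoSupport_eq_of_V2 (1 : Γ.DyerGroup) hv k
    rw [one_mul, h0] at h1
    rw [h1, map_zpow, projCox_gen h hv, Finset.card_empty, add_zero]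
    exact length_simple_zpow_le _ _ _
  · rw [map_zpow, projCox_gen_of_ne h hv, one_zpow, CoxeterSystem.length_one, zero_add]
    have : expoSupport (Γ.gen v ^ k) ⊆ {v} := by
      intro x
      by_cases hx : Γ.f x = 2
      · simp [not_mem_expoSupport hx]
      · rw [mem_expoSupport hx, Finset.mem_singleton]
        intro hne
        by_contra hxv
        exact hne (by rw [map_zpow, expo_gen_of_ne hx (Ne.symm hxv), one_zpow])
    simpa using Finset.card_le_card this

/-- The syllable length splits as a sum over the direct factors of `D`. -/
lemma sylLength_eq {zs : List V} (hnd : zs.Nodup) (hzs : ∀ v, v ∈ zs ↔ Γ.f v ≠ 2)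
    (g : Γ.DyerGroup) : sylLength (Set.range Γ.gen) g = normLength h g := by
  have hmem : normLength h g ∈ {n | ∃ l : List (Γ.DyerGroup × ℤ), l.length = n ∧
      (∀ p ∈ l, p.1 ∈ Set.range Γ.gen) ∧ (l.map fun p => p.1 ^ p.2).prod = g} := by
    obtain ⟨c, hc⟩ := exists_normal_form h hnd hzs g
    obtain ⟨ω, hω, hωe⟩ := (cox h).exists_isReduced (projCox h g)
    have hexp : ∀ v (hv : Γ.f v ≠ 2),
        expo hv g = Multiplicative.ofAdd (c v : ZMod (Γ.f v).toNat) := by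
      intro v hv
      rw [hc, map_mul, expo_incl, one_mul, expo_powProd hnd hv ((hzs v).mpr hv)]
    refine ⟨(ω.map fun i : {x : V // Γ.f x = 2} => (Γ.gen i, (1 : ℤ))) ++
      ((zs.filter (· ∈ expoSupport g)).map fun v => (Γ.gen v, c v)), ?_, ?_, ?_⟩
    · rw [List.length_append, List.length_map, List.length_map, normLength, hωe, hω.eq,
        ← List.toFinset_card_of_nodup (hnd.filter _)]
      congr 1
      apply congrArg Finset.card
      ext v
      simp only [List.mem_toFinset, List.mem_filter, decide_eq_true_eq, and_iff_right_iff_imp]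
      intro hv
      rw [hzs]
      intro h2
      exact not_mem_expoSupport h2 hv
    · intro p hp
      rcases List.mem_append.mp hp with hp | hp
      · obtain ⟨i, _, rfl⟩ := List.mem_map.mp hp
        exact ⟨i, rfl⟩
      · obtain ⟨i, _, rfl⟩ := List.mem_map.mp hp
        exact ⟨i, rfl⟩
    · rw [List.map_append, List.prod_append]
      conv_rhs => rw [hc]
      congr 1
      · rw [hωe, CoxeterSystem.wordProd, map_list_prod, List.map_map, List.map_map]
        congr 1
      -- Dropping the vertices of trivial exponent does not change the product.
      · have key : ∀ l : List V, (∀ v ∈ l, Γ.f v ≠ 2) →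
            ((((l.filter (· ∈ expoSupport g)).map fun v => (Γ.gen v, c v)).map
              fun p => p.1 ^ p.2).prod) = powProd Γ l c := by
          intro l hl
          induction l with
          | nil => simp [powProd]
          | cons v l ih =>
            have ih' := ih fun x hx => hl x (List.mem_cons_of_mem _ hx)
            have hv := hl v List.mem_cons_self
            have hcons : powProd Γ (v :: l) c = Γ.gen v ^ c v * powProd Γ l c := by
              simp [powProd]
            rw [hcons, ← ih']
            by_cases hvs : v ∈ expoSupport g
            · rw [List.filter_cons_of_pos (by simpa using hvs)]
              simp
            · rw [List.filter_cons_of_neg (by simpa using hvs), gen_zpow_eq_one, one_mul]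
              rw [mem_expoSupport hv, not_not, hexp v hv] at hvs
              exact hvs
        exact key zs fun v hv => (hzs v).mp hv
  apply le_antisymm
  · exact Nat.sInf_le hmem
  · apply le_csInf ⟨_, hmem⟩
    rintro n ⟨l, rfl, hl, rfl⟩
    clear hmem
    induction l with
    | nil => simp [normLength_one]
    | cons p l ih =>
      have h1 := ih fun q hq => hl q (List.mem_cons_of_mem _ hq)
      obtain ⟨v, hv⟩ := hl p List.mem_cons_self
      have h2 := normLength_gen_zpow_le h v p.2
      rw [hv] at h2
      simp only [List.map_cons, List.prod_cons, List.length_cons]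
      have h3 := normLength_mul_le h (p.1 ^ p.2) (l.map fun p => p.1 ^ p.2).prod
      omega

/-! ### Shortening by powers of a generator -/

/-- `g` can be shortened by a power of `v ∈ V₂` if and only if `v` is a right descent of the
Coxeter component of `g`. -/
lemma exists_normLength_lt_of_V2 (g : Γ.DyerGroup) {v : V} (hv : Γ.f v = 2) :
    (∃ k : ℤ, normLength h (g * Γ.gen v ^ k) < normLength h g) ↔
      (cox h).IsRightDescent (projCox h g) ⟨v, hv⟩ := by
  have hE := expoSupport_eq_of_V2 g hv
  simp only [normLength, hE, map_mul, map_zpow, projCox_gen h hv, add_lt_add_iff_right]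
  constructor
  · rintro ⟨k, hk⟩
    rcases Int.even_or_odd' k with ⟨n, rfl | rfl⟩
    · rw [zpow_mul, zpow_two, CoxeterSystem.simple_mul_simple_self, one_zpow, mul_one] at hk
      omega
    · rwa [zpow_add, zpow_mul, zpow_two, CoxeterSystem.simple_mul_simple_self, one_zpow, one_mul,
        zpow_one] at hk
  · intro hd
    exact ⟨1, by rw [zpow_one]; exact hd⟩

/-- `g` can be shortened by a power of `v ∉ V₂` if and only if `v` has nonzero exponent in `g`. -/
lemma exists_normLength_lt_of_ne (g : Γ.DyerGroup) {v : V} (hv : Γ.f v ≠ 2) :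
    (∃ k : ℤ, normLength h (g * Γ.gen v ^ k) < normLength h g) ↔ expo hv g ≠ 1 := by
  have hother : ∀ (k : ℤ) (x : V), x ≠ v →
      (x ∈ expoSupport (g * Γ.gen v ^ k) ↔ x ∈ expoSupport g) := by
    intro k x hxv
    by_cases hx : Γ.f x = 2
    · simp [not_mem_expoSupport hx]
    · rw [mem_expoSupport hx, mem_expoSupport hx, map_mul, map_zpow,
        expo_gen_of_ne hx (Ne.symm hxv), one_zpow, mul_one]
  simp only [normLength, map_mul, map_zpow, projCox_gen_of_ne h hv, one_zpow, mul_one,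
    add_lt_add_iff_left]
  constructor
  · rintro ⟨k, hk⟩ h1
    have hsub : expoSupport g ⊆ expoSupport (g * Γ.gen v ^ k) := by
      intro x hx
      have hxv : x ≠ v := by
        rintro rfl
        exact (mem_expoSupport hv).mp hx h1
      exact (hother k x hxv).mpr hx
    exact absurd (Finset.card_le_card hsub) (not_le.mpr hk)
  · intro hne
    obtain ⟨k, hk⟩ := ZMod.intCast_surjective (Multiplicative.toAdd (expo hv g))
    refine ⟨-k, Finset.card_lt_card (Finset.ssubset_iff_subset_ne.mpr ⟨?_, ?_⟩)⟩
    · intro x hx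
      by_cases hxv : x = v
      · rw [hxv]; exact (mem_expoSupport hv).mpr hne
      · exact (hother _ x hxv).mp hx
    · intro e
      have h1 : v ∈ expoSupport (g * Γ.gen v ^ (-k)) := by
        rw [e]; exact (mem_expoSupport hv).mpr hne
      apply (mem_expoSupport hv).mp h1
      rw [map_mul, expo_gen_zpow, Int.cast_neg, hk, ofAdd_neg, ofAdd_toAdd, mul_inv_cancel]

/-- Membership in `B_∅` in terms of the components of `g`. -/
lemma mem_Bmin_empty_iff_components {zs : List V} (hnd : zs.Nodup)
    (hzs : ∀ v, v ∈ zs ↔ Γ.f v ≠ 2) {w₀ : (coxMatrix Γ h).Group}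
    (hmax : ∀ w, (cox h).length w ≤ (cox h).length w₀) (g : Γ.DyerGroup) :
    g ∈ Γ.Bmin (∅ : Set V) ↔
      projCox h g = w₀ ∧ ∀ v (hv : Γ.f v ≠ 2), expo hv g ≠ 1 := by
  rw [mem_Bmin_empty_iff]
  simp only [sylLength_eq h hnd hzs]
  rw [← forall_isRightDescent_iff (cox h) hmax]
  constructor
  · intro H
    exact ⟨fun i => (exists_normLength_lt_of_V2 h g i.2).mp (H i),
      fun v hv => (exists_normLength_lt_of_ne h g hv).mp (H v)⟩
  · rintro ⟨H1, H2⟩ v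
    by_cases hv : Γ.f v = 2
    · exact (exists_normLength_lt_of_V2 h g hv).mpr (H1 ⟨v, hv⟩)
    · exact (exists_normLength_lt_of_ne h g hv).mpr (H2 v hv)

end Dyer

end DyerSpherical

open DyerSpherical

/-- For a Dyer system of spherical type with `V_p = {x_1,…,x_k}` and `V_∞ = {y_1,…,y_l}`,
an element `g` lies in `B_∅` if and only if
`g = w₀ x_1^{a_1} ⋯ x_k^{a_k} y_1^{b_1} ⋯ y_l^{b_l}` where `w₀` is the longest element of
`D_2`, each `a_i` is nonzero in `ℤ/f(x_i)ℤ`, and each `b_j` is a nonzero integer. -/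
theorem mem_Bmin_empty_iff_of_spherical
    {V : Type} [Fintype V] (Γ : DyerGraph V) (h : Γ.Spherical)
    (xs ys : List V) (hxs : xs.Nodup) (hxsV : {x | x ∈ xs} = Γ.Vp)
    (hys : ys.Nodup) (hysV : {y | y ∈ ys} = Γ.Vinf)
    (w₀ : Γ.DyerGroup) (hw₀mem : w₀ ∈ Γ.parabolic Γ.V2)
    (hw₀long : ∀ h' ∈ Γ.parabolic Γ.V2,
      wordLength (Γ.gen '' Γ.V2) h' ≤ wordLength (Γ.gen '' Γ.V2) w₀)
    (g : Γ.DyerGroup) :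
    g ∈ Γ.Bmin (∅ : Set V) ↔
      ∃ (a : V → ℤ) (b : V → ℤ),
        (∀ x ∈ xs, ((a x : ℤ) : ZMod (Γ.f x).toNat) ≠ 0) ∧
        (∀ y ∈ ys, b y ≠ 0) ∧
        g = w₀ * (xs.map fun x => Γ.gen x ^ a x).prod *
              (ys.map fun y => Γ.gen y ^ b y).prod := by
  obtain ⟨hΓ, -⟩ := h
  have hx : ∀ x, x ∈ xs ↔ 2 < Γ.f x ∧ Γ.f x ≠ ⊤ := fun x => Set.ext_iff.mp hxsV x
  have hy : ∀ y, y ∈ ys ↔ Γ.f y = ⊤ := fun y => Set.ext_iff.mp hysV y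
  have hnd : (xs ++ ys).Nodup := by
    refine hxs.append hys ?_
    intro v h1 h2
    exact ((hx v).mp h1).2 ((hy v).mp h2)
  have hzs : ∀ v, v ∈ xs ++ ys ↔ Γ.f v ≠ 2 := by
    intro v
    rw [List.mem_append, hx, hy]
    constructor
    · rintro (h1 | h1)
      · exact h1.1.ne'
      · rw [h1]; exact ENat.top_ne_ofNat 2
    · intro h1
      by_cases h2 : Γ.f v = ⊤
      · exact Or.inr h2
      · exact Or.inl ⟨lt_of_le_of_ne (Γ.f_ge v) h1.symm, h2⟩
  obtain ⟨w, rfl⟩ : w₀ ∈ (incl hΓ).range := by rwa [← parabolic_V2_eq hΓ]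
  have hmax : ∀ w', (cox hΓ).length w' ≤ (cox hΓ).length w := by
    intro w'
    rw [← wordLength_incl, ← wordLength_incl]
    exact hw₀long _ (by rw [parabolic_V2_eq hΓ]; exact ⟨w', rfl⟩)
  rw [mem_Bmin_empty_iff_components hΓ hnd hzs hmax]
  constructor
  · rintro ⟨h1, h2⟩
    obtain ⟨c, hc⟩ := exists_normal_form hΓ hnd hzs g
    have hexp : ∀ v, v ∈ xs ++ ys → (c v : ZMod (Γ.f v).toNat) ≠ 0 := by
      intro v hv h0
      have hv2 := (hzs v).mp hv
      apply h2 v hv2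
      rw [hc, map_mul, expo_incl, one_mul, expo_powProd hnd hv2 hv, h0, ofAdd_zero]
    refine ⟨c, c, fun x hx => hexp x (List.mem_append_left _ hx), ?_, ?_⟩
    · intro y hy h0
      exact hexp y (List.mem_append_right _ hy) (by rw [h0, Int.cast_zero])
    · rw [h1, powProd, List.map_append, List.prod_append, ← mul_assoc] at hc
      exact hc
  · rintro ⟨a, b, ha, hb, hg⟩
    have hc : g = incl hΓ w * powProd Γ (xs ++ ys) (fun v => if v ∈ xs then a v else b v) := by
      rw [hg, powProd, List.map_append, List.prod_append, ← mul_assoc]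
      congr 1
      · congr 2
        apply List.map_congr_left
        intro x hx
        rw [if_pos hx]
      · congr 1
        apply List.map_congr_left
        intro y hy'
        rw [if_neg fun h1 => ((hx y).mp h1).2 ((hy y).mp hy')]
    refine ⟨?_, ?_⟩
    · rw [hc, map_mul, projCox_incl, projCox_powProd hΓ fun v hv => (hzs v).mp hv, mul_one]
    · intro v hv
      have hvm := (hzs v).mpr hv
      rw [hc, map_mul, expo_incl, one_mul, expo_powProd hnd hv hvm, Ne, ofAdd_eq_one]
      by_cases hvx : v ∈ xs
      · rw [if_pos hvx]; exact ha v hvx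
      · rw [if_neg hvx]
        have hvy : v ∈ ys := (List.mem_append.mp hvm).resolve_left hvx
        -- Here `f v = ∞`, so the exponent lives in `ZMod 0 = ℤ`.
        rw [ZMod.intCast_zmod_eq_zero_iff_dvd, (hy v).mp hvy]
        simpa using hb v hvy
end

section
/- Let (D,V) be a Dyer system of spherical type with l = |V_∞| and let m be the maximal word length of an element of the finite Coxeter group D_2. Define, for x ∈ V_p, P_x(t) = 2t + 2t² + ⋯ + 2t^{r−1} + t^r if f(x) = 2r is even, and P_x(t) = 2t + 2t² + ⋯ + 2t^r if f(x) = 2r+1 is odd, and set P_D(t) = t^m (Π_{x∈V_p} P_x(t)) · 2^l t^l (1−t)^{−l} ∈ ℤ[[t]]. Then (P_D(t) + (−1)^{|V|+1}) · 𝒢_{(D,V)}(t)^{−1} = Σ_{Y ⊊ V} (−1)^{|Y|} · 𝒢_{(D_Y,Y)}(t)^{−1} in ℤ[[t]]. -/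
/-!
The proof rests on the fact that a Dyer group of spherical type is the internal direct product of
the finite Coxeter group `D₂` and the cyclic groups generated by the vertices outside `V₂`. Word
length is additive on such a product, so growth series multiply (`growthSeries_union`).

*Coxeter part.* For a finite Coxeter system `(W, S)` and `T ⊆ S`, let `W^T` be the set of elements
without right descents in `T`. Every element of `W` factors uniquely, with additive lengths, as an
element of `W^T` times an element of `W_T`, so `W(t) = W^T(t) W_T(t)`
(`CoxeterSystem.growthSeries_eq_minReps_mul`). In the alternating sum `∑_T (-1)^{|T|} W^T(t)` an
element `w` is counted once, with sign, for every `T` disjoint from its set of right descents; these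
contributions cancel unless all simple reflections are descents of `w`, which holds only for the
longest element. The sum is therefore `t^m` (`CoxeterSystem.sum_lenSeries_minReps`), and dividing
by `W(t)` gives `∑_T (-1)^{|T|} / W_T(t) = t^m / W(t)`. The combinatorics of lengths used here comes
from the exchange condition (`CoxeterSystem.exchange`), proved by letting `W` act on `W × ℤ/2` by
conjugation with a sign which records the parity of occurrences in an inversion sequence.

*Cyclic factors.* The growth series of the cyclic group at `x` is `1 + P_x`, where `P_x` is the
polynomial of the statement for `x ∈ V_p` and `2t / (1 - t)` for `x ∈ V_∞`. Adjoining `x` to the set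
of vertices multiplies the alternating sum of inverse growth series over all subsets by
`1 - 1 / (1 + P_x) = P_x / (1 + P_x)`. Hence the sum over all subsets of `V` is `P_D(t) / 𝒢(t)`
(`DyerGraph.sum_inverse_growthSeries_union`), and moving the term of `V` itself to the other side
yields the claim.
-/

open scoped Classical

open PowerSeries in
/-- The polynomial `P_x(t)`: for `n = 2r` even it is `2t + ⋯ + 2t^{r−1} + t^r`, and for
`n = 2r + 1` odd it is `2t + ⋯ + 2t^r`. -/
noncomputable def Ppoly (n : ℕ) : PowerSeries ℤ :=
  if n % 2 = 0 then
    (∑ i ∈ Finset.Ico 1 (n / 2), 2 * (X : PowerSeries ℤ) ^ i) + (X : PowerSeries ℤ) ^ (n / 2)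
  else
    ∑ i ∈ Finset.Icc 1 (n / 2), 2 * (X : PowerSeries ℤ) ^ i

/-! ### Growth series and word length -/

section Series

/-- The generating series of a subset `A` graded by `len`. -/
noncomputable def lenSeries {α : Type*} (A : Set α) (len : α → ℕ) : PowerSeries ℤ :=
  PowerSeries.mk fun n => (Set.ncard {a ∈ A | len a = n} : ℤ)

/-- A length-additive bijection `A × B → E` makes the generating series multiply. -/
theorem lenSeries_mul {α β γ : Type*} {A : Set α} {B : Set β} {E : Set γ}
    {la : α → ℕ} {lb : β → ℕ} {le : γ → ℕ} (φ : α × β → γ)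
    (hφ : Set.BijOn φ (A ×ˢ B) E)
    (hl : ∀ a ∈ A, ∀ b ∈ B, le (φ (a, b)) = la a + lb b)
    (hA : ∀ n, {a ∈ A | la a = n}.Finite) (hB : ∀ n, {b ∈ B | lb b = n}.Finite) :
    lenSeries E le = lenSeries A la * lenSeries B lb := by
  ext n
  rw [PowerSeries.coeff_mul]
  simp only [lenSeries, PowerSeries.coeff_mk]
  have h1 : {g ∈ E | le g = n} =
      φ '' (((Finset.HasAntidiagonal.antidiagonal n).biUnion fun p =>
        (hA p.1).toFinset ×ˢ (hB p.2).toFinset : Finset (α × β)) : Set (α × β)) := by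
    ext g
    constructor
    · rintro ⟨hg, rfl⟩
      obtain ⟨⟨a, b⟩, ⟨ha, hb⟩, rfl⟩ := hφ.surjOn hg
      refine ⟨(a, b), ?_, rfl⟩
      simp only [Finset.coe_biUnion, Set.mem_iUnion]
      refine ⟨(la a, lb b), ?_, ?_⟩
      · simpa using (hl a ha b hb).symm
      · simp only [Finset.coe_product, Set.mem_prod, Set.Finite.coe_toFinset]
        exact ⟨⟨ha, rfl⟩, ⟨hb, rfl⟩⟩
    · rintro ⟨⟨a, b⟩, h, rfl⟩
      simp only [Finset.coe_biUnion, Set.mem_iUnion, Finset.coe_product, Set.mem_prod,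
        Set.Finite.coe_toFinset, Finset.mem_coe, Finset.HasAntidiagonal.mem_antidiagonal] at h
      obtain ⟨p, hp, ⟨ha, ha'⟩, hb, hb'⟩ := h
      refine ⟨hφ.mapsTo ⟨ha, hb⟩, ?_⟩
      rw [hl a ha b hb]
      omega
  have hinj : Set.InjOn φ (((Finset.HasAntidiagonal.antidiagonal n).biUnion fun p =>
        (hA p.1).toFinset ×ˢ (hB p.2).toFinset : Finset (α × β)) : Set (α × β)) := by
    refine hφ.injOn.mono ?_
    rintro ⟨a, b⟩ h
    simp only [Finset.coe_biUnion, Set.mem_iUnion, Finset.coe_product, Set.mem_prod,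
        Set.Finite.coe_toFinset] at h
    obtain ⟨p, -, ⟨ha, -⟩, hb, -⟩ := h
    exact ⟨ha, hb⟩
  rw [h1, hinj.ncard_image, Set.ncard_coe_finset, Finset.card_biUnion]
  · push_cast
    refine Finset.sum_congr rfl fun p _ => ?_
    rw [Finset.card_product, Set.ncard_eq_toFinset_card _ (hA p.1),
      Set.ncard_eq_toFinset_card _ (hB p.2)]
    push_cast
    rfl
  · intro p _ q _ hpq
    rw [Function.onFun, Finset.disjoint_left]
    rintro ⟨a, b⟩ h1 h2
    simp only [Finset.mem_product, Set.Finite.mem_toFinset, Set.mem_ofPred_eq] at h1 h2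
    exact hpq (Prod.ext (h1.1.2.symm.trans h2.1.2) (h1.2.2.symm.trans h2.2.2))

end Series

section WordLength

variable {G : Type*} [Group G]

theorem growthSeries_eq_lenSeries (S A : Set G) :
    growthSeries S A = lenSeries A (wordLength S) := rfl

theorem wordLength_prod_le {S : Set G} (w : List G) (hw : ∀ a ∈ w, a ∈ S ∪ S⁻¹) :
    wordLength S w.prod ≤ w.length := Nat.sInf_le ⟨w, rfl, hw, rfl⟩

theorem mem_closure_of_mem_alphabet {S : Set G} {a : G} (ha : a ∈ S ∪ S⁻¹) :
    a ∈ Subgroup.closure S := by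
  rcases ha with ha | ha
  · exact Subgroup.subset_closure ha
  · exact (Subgroup.inv_mem_iff _).1 (Subgroup.subset_closure ha)

theorem prod_mem_closure {S : Set G} {w : List G} (hw : ∀ a ∈ w, a ∈ S ∪ S⁻¹) :
    w.prod ∈ Subgroup.closure S :=
  list_prod_mem fun a ha => mem_closure_of_mem_alphabet (hw a ha)

theorem exists_geodesic {S : Set G} {g : G} (hg : g ∈ Subgroup.closure S) :
    ∃ w : List G, w.length = wordLength S g ∧ (∀ a ∈ w, a ∈ S ∪ S⁻¹) ∧ w.prod = g := by
  have : {n | ∃ w : List G, w.length = n ∧ (∀ a ∈ w, a ∈ S ∪ S⁻¹) ∧ w.prod = g}.Nonempty := by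
    rw [← Subgroup.mem_toSubmonoid, Subgroup.closure_toSubmonoid] at hg
    obtain ⟨l, hl, hp⟩ := Submonoid.exists_list_of_mem_closure hg
    exact ⟨l.length, l, rfl, fun a ha => hl a ha, hp⟩
  exact Nat.sInf_mem this

theorem wordLength_one (S : Set G) : wordLength S 1 = 0 := by
  simpa using wordLength_prod_le (S := S) [] (by simp)

theorem wordLength_eq_zero_iff {S : Set G} {g : G} (hg : g ∈ Subgroup.closure S) :
    wordLength S g = 0 ↔ g = 1 := by
  constructor
  · intro h
    obtain ⟨w, hw, -, rfl⟩ := exists_geodesic hg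
    rw [h, List.length_eq_zero_iff] at hw
    simp [hw]
  · rintro rfl
    exact wordLength_one S

theorem finite_sphere {S : Set G} (hS : S.Finite) (n : ℕ) :
    {g ∈ (Subgroup.closure S : Set G) | wordLength S g = n}.Finite := by
  have : Finite ↥(S ∪ S⁻¹) := (hS.union hS.inv).to_subtype
  refine ((List.finite_length_eq ↥(S ∪ S⁻¹) n).image
    fun l => (l.map Subtype.val).prod).subset ?_
  rintro g ⟨hg, hn⟩
  obtain ⟨w, hw, hS, rfl⟩ := exists_geodesic hg
  lift w to List ↥(S ∪ S⁻¹) using hS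
  refine ⟨w, ?_, rfl⟩
  simpa using hw.trans hn

/-- The constant coefficient is `1`, since the identity is the only element of length `0`. -/
theorem isUnit_growthSeries (S : Set G) :
    IsUnit (growthSeries S (Subgroup.closure S : Set G)) := by
  rw [PowerSeries.isUnit_iff_constantCoeff, ← PowerSeries.coeff_zero_eq_constantCoeff_apply,
    growthSeries, PowerSeries.coeff_mk]
  have : {g ∈ (Subgroup.closure S : Set G) | wordLength S g = 0} = {1} := by
    ext g
    constructor
    · rintro ⟨hg, h⟩
      exact (wordLength_eq_zero_iff hg).1 h
    · rintro rfl
      exact ⟨one_mem _, wordLength_one S⟩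
  rw [this]
  simp

/-- Word length is preserved by injective homomorphisms. -/
theorem wordLength_map {H : Type*} [Group H] {ι : G →* H} (hι : Function.Injective ι)
    (S : Set G) (g : G) : wordLength (ι '' S) (ι g) = wordLength S g := by
  unfold wordLength
  congr 1
  ext n
  have hS : ι '' S ∪ (ι '' S)⁻¹ = ι '' (S ∪ S⁻¹) := by
    rw [Set.image_union, Set.image_inv]
  rw [Set.mem_ofPred_eq, hS]
  constructor
  · rintro ⟨w, hn, hw, hp⟩
    have : w ∈ Set.range (List.map ι) := by
      rw [Set.range_list_map]
      intro a ha
      obtain ⟨b, -, rfl⟩ := hw a ha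
      exact ⟨b, rfl⟩
    obtain ⟨w, rfl⟩ := this
    refine ⟨w, by simpa using hn, fun a ha => ?_, hι (by rw [map_list_prod, hp])⟩
    obtain ⟨b, hb, hab⟩ := hw (ι a) (List.mem_map_of_mem ha)
    rwa [← hι hab]
  · rintro ⟨w, hn, hw, rfl⟩
    refine ⟨w.map ι, by simpa using hn, fun a ha => ?_, by rw [map_list_prod]⟩
    obtain ⟨b, hb, rfl⟩ := List.mem_map.1 ha
    exact ⟨b, hw b hb, rfl⟩

theorem growthSeries_map {H : Type*} [Group H] {ι : G →* H} (hι : Function.Injective ι)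
    (S A : Set G) : growthSeries (ι '' S) (ι '' A) = growthSeries S A := by
  ext n
  simp only [growthSeries, PowerSeries.coeff_mk]
  rw [← Set.ncard_image_of_injective {g ∈ A | wordLength S g = n} hι]
  congr 2
  ext x
  constructor
  · rintro ⟨⟨g, hg, rfl⟩, hn⟩
    exact ⟨g, ⟨hg, by rwa [wordLength_map hι] at hn⟩, rfl⟩
  · rintro ⟨g, ⟨hg, hn⟩, rfl⟩
    exact ⟨⟨g, hg, rfl⟩, by rwa [wordLength_map hι]⟩

theorem commute_of_mem_closure {S T : Set G} (hc : ∀ s ∈ S, ∀ t ∈ T, Commute s t)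
    {h k : G} (hh : h ∈ Subgroup.closure S) (hk : k ∈ Subgroup.closure T) : Commute h k := by
  induction hh using Subgroup.closure_induction with
  | mem s hs =>
    induction hk using Subgroup.closure_induction with
    | mem t ht => exact hc s hs t ht
    | one => exact Commute.one_right _
    | mul x y _ _ hx hy => exact hx.mul_right hy
    | inv x _ hx => exact hx.inv_right
  | one => exact Commute.one_left _
  | mul x y _ _ hx hy => exact hx.mul_left hy
  | inv x _ hx => exact hx.inv_left

/-- A word in two commuting alphabets can be sorted without changing its length. -/
theorem exists_sorted_word {S T : Set G} (hc : ∀ s ∈ S, ∀ t ∈ T, Commute s t)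
    (w : List G) (hw : ∀ a ∈ w, a ∈ (S ∪ T) ∪ (S ∪ T)⁻¹) :
    ∃ u v : List G, (∀ a ∈ u, a ∈ S ∪ S⁻¹) ∧ (∀ a ∈ v, a ∈ T ∪ T⁻¹) ∧
      u.length + v.length = w.length ∧ u.prod * v.prod = w.prod := by
  induction w with
  | nil => exact ⟨[], [], by simp, by simp, rfl, by simp⟩
  | cons a w ih =>
    obtain ⟨u, v, hu, hv, hlen, hprod⟩ := ih fun b hb => hw b (List.mem_cons_of_mem _ hb)
    have ha : a ∈ S ∪ S⁻¹ ∨ a ∈ T ∪ T⁻¹ := by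
      have := hw a List.mem_cons_self
      simp only [Set.mem_union, Set.mem_inv] at this ⊢
      tauto
    rcases ha with ha | ha
    · refine ⟨a :: u, v, List.forall_mem_cons.2 ⟨ha, hu⟩, hv, by simp; omega, ?_⟩
      rw [List.prod_cons, List.prod_cons, mul_assoc, hprod]
    · refine ⟨u, a :: v, hu, List.forall_mem_cons.2 ⟨ha, hv⟩, by simp; omega, ?_⟩
      have := commute_of_mem_closure hc (prod_mem_closure hu) (mem_closure_of_mem_alphabet ha)
      rw [List.prod_cons, List.prod_cons, ← mul_assoc, this.eq, mul_assoc, hprod]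

theorem eq_of_mul_eq_mul_of_disjoint {H K : Subgroup G} (hd : Disjoint H K) {h h' k k' : G}
    (hh : h ∈ H) (hh' : h' ∈ H) (hk : k ∈ K) (hk' : k' ∈ K) (e : h * k = h' * k') :
    h = h' ∧ k = k' := by
  have e1 : h'⁻¹ * h = k' * k⁻¹ := by
    rw [eq_mul_inv_iff_mul_eq, mul_assoc, e, inv_mul_cancel_left]
  have h1 : h'⁻¹ * h = 1 := Subgroup.disjoint_def.1 hd (mul_mem (inv_mem hh') hh)
    (e1 ▸ mul_mem hk' (inv_mem hk))
  have h2 : k' * k⁻¹ = 1 := e1 ▸ h1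
  exact ⟨(inv_mul_eq_one.1 h1).symm, (mul_inv_eq_one.1 h2).symm⟩

theorem wordLength_union {S T : Set G} (hc : ∀ s ∈ S, ∀ t ∈ T, Commute s t)
    (hd : Disjoint (Subgroup.closure S) (Subgroup.closure T)) {h k : G}
    (hh : h ∈ Subgroup.closure S) (hk : k ∈ Subgroup.closure T) :
    wordLength (S ∪ T) (h * k) = wordLength S h + wordLength T k := by
  apply le_antisymm
  · obtain ⟨u, hu, hu', rfl⟩ := exists_geodesic hh
    obtain ⟨v, hv, hv', rfl⟩ := exists_geodesic hk
    rw [← hu, ← hv, ← List.length_append, ← List.prod_append]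
    refine wordLength_prod_le _ fun a ha => ?_
    simp only [Set.mem_union, Set.mem_inv] at hu' hv' ⊢
    rcases List.mem_append.1 ha with ha | ha
    · have := hu' a ha
      tauto
    · have := hv' a ha
      tauto
  · have hhk : h * k ∈ Subgroup.closure (S ∪ T) :=
      mul_mem (Subgroup.closure_mono Set.subset_union_left hh)
        (Subgroup.closure_mono Set.subset_union_right hk)
    obtain ⟨w, hw, hw', hp⟩ := exists_geodesic hhk
    obtain ⟨u, v, hu, hv, hlen, hprod⟩ := exists_sorted_word hc w hw'
    obtain ⟨rfl, rfl⟩ := eq_of_mul_eq_mul_of_disjoint hd (prod_mem_closure hu) hh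
      (prod_mem_closure hv) hk (hprod.trans hp)
    rw [← hw, ← hlen]
    exact add_le_add (wordLength_prod_le u hu) (wordLength_prod_le v hv)

/-- Growth series are multiplicative for internal direct products. -/
theorem growthSeries_union {S T : Set G} (hS : S.Finite) (hT : T.Finite)
    (hc : ∀ s ∈ S, ∀ t ∈ T, Commute s t)
    (hd : Disjoint (Subgroup.closure S) (Subgroup.closure T)) :
    growthSeries (S ∪ T) (Subgroup.closure (S ∪ T) : Set G) =
      growthSeries S (Subgroup.closure S : Set G) *
        growthSeries T (Subgroup.closure T : Set G) := by
  refine lenSeries_mul (fun p : G × G => p.1 * p.2) ⟨?_, ?_, ?_⟩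
    (fun a ha b hb => wordLength_union hc hd ha hb) (finite_sphere hS) (finite_sphere hT)
  · rintro ⟨h, k⟩ ⟨hh, hk⟩
    exact mul_mem (Subgroup.closure_mono Set.subset_union_left hh)
        (Subgroup.closure_mono Set.subset_union_right hk)
  · rintro ⟨h, k⟩ ⟨hh, hk⟩ ⟨h', k'⟩ ⟨hh', hk'⟩ e
    obtain ⟨rfl, rfl⟩ := eq_of_mul_eq_mul_of_disjoint hd hh hh' hk hk' e
    rfl
  · intro g hg
    obtain ⟨w, -, hw, rfl⟩ := exists_geodesic hg
    obtain ⟨u, v, hu, hv, -, hprod⟩ := exists_sorted_word hc w hw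
    exact ⟨(u.prod, v.prod), ⟨prod_mem_closure hu, prod_mem_closure hv⟩, hprod⟩

end WordLength

/-! ### Finite Coxeter groups -/

section Coxeter

namespace CoxeterSystem

variable {B W : Type*} [Group W] {M : CoxeterMatrix B} (cs : CoxeterSystem M W)

/-- The action of the simple reflection `s i` on `W × ℤ/2`: conjugation on the first coordinate,
with a sign change exactly at `s i`. -/
noncomputable def signedConj (i : B) (p : W × ZMod 2) : W × ZMod 2 :=
  (cs.simple i * p.1 * cs.simple i, p.2 + if p.1 = cs.simple i then 1 else 0)

/-- Write `p = sᵢsⱼ`. Under the `k`-th iterate of the action of `p`, the sign of `t` changes once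
for each index `b < 2k` with `t = p⁻ᵇ sⱼ`. -/
theorem signedConj_signedConj_iterate (i j : B) (k : ℕ) (t : W) (e : ZMod 2) :
    (fun p => cs.signedConj i (cs.signedConj j p))^[k] (t, e) =
      ((cs.simple i * cs.simple j) ^ k * t * ((cs.simple i * cs.simple j) ^ k)⁻¹,
        e + ∑ b ∈ Finset.range (2 * k),
          if t = ((cs.simple i * cs.simple j) ^ b)⁻¹ * cs.simple j then 1 else 0) := by
  set p := cs.simple i * cs.simple j with hp
  have hjp : ∀ k : ℕ, cs.simple j * p ^ k = (p ^ k)⁻¹ * cs.simple j := by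
    intro k
    induction k with
    | zero => simp
    | succ k ih =>
      have h1 : cs.simple j * p = p⁻¹ * cs.simple j := by simp [hp, mul_assoc]
      rw [pow_succ, ← mul_assoc, ih, mul_assoc, h1, ← mul_assoc, ← mul_inv_rev, ← pow_succ',
        ← pow_succ]
  induction k with
  | zero => simp
  | succ k ih =>
    rw [Function.iterate_succ_apply', ih]
    have e1 : (p ^ k * t * (p ^ k)⁻¹ = cs.simple j) ↔ t = (p ^ (2 * k))⁻¹ * cs.simple j := by
      have : (p ^ (2 * k))⁻¹ * cs.simple j = (p ^ k)⁻¹ * cs.simple j * p ^ k := by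
        rw [mul_assoc, hjp, ← mul_assoc, two_mul, pow_add, mul_inv_rev]
      rw [this, mul_inv_eq_iff_eq_mul, mul_assoc, eq_inv_mul_iff_mul_eq]
    have e2 : (cs.simple j * (p ^ k * t * (p ^ k)⁻¹) * cs.simple j = cs.simple i) ↔
        t = (p ^ (2 * k + 1))⁻¹ * cs.simple j := by
      have : (p ^ (2 * k + 1))⁻¹ * cs.simple j =
          (p ^ k)⁻¹ * (cs.simple j * cs.simple i * cs.simple j) * p ^ k := by
        have h1 : cs.simple j * cs.simple i = p⁻¹ := by simp [hp]
        rw [h1, mul_assoc, mul_assoc p⁻¹, hjp, ← mul_assoc, ← mul_assoc]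
        congr 1
        rw [two_mul, pow_succ, pow_add]
        simp only [mul_inv_rev]
        rw [← mul_assoc, ← mul_inv_rev p, ← mul_inv_rev (p ^ k) p, ← pow_succ, ← pow_succ']
      rw [this]
      constructor
      · intro h
        rw [← h]
        simp [mul_assoc]
      · rintro rfl
        simp [mul_assoc]
    have e3 : 2 * (k + 1) = 2 * k + 1 + 1 := by ring
    rw [e3, Finset.sum_range_succ, Finset.sum_range_succ]
    simp only [signedConj, e1, e2]
    refine Prod.ext ?_ ?_
    · simp only [hp, pow_succ', mul_inv_rev, inv_simple, mul_assoc]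
    · simp only [add_assoc]

/-- The braid relations hold: the indices `b` and `b + M i j` give the same reflection, so the sign
changes cancel in pairs. -/
theorem signedConj_iterate_eq (i j : B) (q : W × ZMod 2) :
    (fun p => cs.signedConj i (cs.signedConj j p))^[M i j] q = q := by
  obtain ⟨t, e⟩ := q
  rw [signedConj_signedConj_iterate, cs.simple_mul_simple_pow, two_mul, Finset.sum_range_add]
  refine Prod.ext (by simp) ?_
  simp only [pow_add, cs.simple_mul_simple_pow, one_mul]
  rw [CharTwo.add_self_eq_zero, add_zero]

/-- `signedConj` as a permutation. -/
noncomputable def signedPerm (i : B) : Equiv.Perm (W × ZMod 2) :=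
  Function.Involutive.toPerm (cs.signedConj i) fun q => by
    simpa [M.diagonal i] using cs.signedConj_iterate_eq i i q

theorem isLiftable_signedPerm : M.IsLiftable cs.signedPerm := fun i j => by
  ext1 q
  rw [← Equiv.Perm.iterate_eq_pow]
  exact cs.signedConj_iterate_eq i j q

/-- The signed conjugation representation of a Coxeter group on `W × ℤ/2`. -/
noncomputable def signedRep : W →* Equiv.Perm (W × ZMod 2) :=
  cs.lift ⟨cs.signedPerm, cs.isLiftable_signedPerm⟩

theorem signedRep_simple (i : B) (q : W × ZMod 2) :
    cs.signedRep (cs.simple i) q = cs.signedConj i q := by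
  rw [signedRep, cs.lift_apply_simple]
  rfl

theorem signedRep_mul (v w : W) (q : W × ZMod 2) :
    cs.signedRep (v * w) q = cs.signedRep v (cs.signedRep w q) := by
  rw [map_mul]; rfl

/-- The sign picked up by `t` under `ω` counts the occurrences of `t` in the right inversion
sequence of `ω`; so the parity of that count depends only on the product of `ω`. -/
theorem signedRep_wordProd (ω : List B) (t : W) (e : ZMod 2) :
    cs.signedRep (cs.wordProd ω) (t, e) =
      (cs.wordProd ω * t * (cs.wordProd ω)⁻¹, e + ((cs.rightInvSeq ω).count t : ZMod 2)) := by
  induction ω with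
  | nil => simp [rightInvSeq]
  | cons i ω ih =>
    rw [wordProd_cons, signedRep_mul, ih, signedRep_simple, signedConj, rightInvSeq,
      List.count_cons]
    have : (cs.wordProd ω * t * (cs.wordProd ω)⁻¹ = cs.simple i) ↔
        ((cs.wordProd ω)⁻¹ * cs.simple i * cs.wordProd ω = t) := by
      constructor
      · intro h; rw [← h]; simp [mul_assoc]
      · rintro rfl; simp [mul_assoc]
    refine Prod.ext ?_ ?_
    · simp [mul_assoc]
    · simp only [this, beq_iff_eq]
      push_cast
      rw [add_assoc]

/-- The exchange condition. By the parity count of `signedRep_wordProd`, a right descent `sᵢ` of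
the product of `ω` occurs in the right inversion sequence of `ω`, even if `ω` is not reduced. -/
theorem exchange (ω : List B) (i : B)
    (h : cs.length (cs.wordProd ω * cs.simple i) < cs.length (cs.wordProd ω)) :
    ∃ j < ω.length, cs.wordProd ω * cs.simple i = cs.wordProd (ω.eraseIdx j) := by
  obtain ⟨ω', hω', hw⟩ := cs.exists_isReduced (cs.wordProd ω * cs.simple i)
  have hnot : cs.simple i ∉ cs.rightInvSeq ω' := fun hmem => by
    have := (cs.isRightInversion_of_mem_rightInvSeq hω' hmem).2
    rw [← hw, simple_mul_simple_cancel_right] at this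
    omega
  have h1 := cs.signedRep_mul (cs.wordProd ω) (cs.simple i) (cs.simple i, 0)
  rw [hw, signedRep_wordProd, signedRep_simple, signedConj, signedRep_wordProd,
    List.count_eq_zero.2 hnot] at h1
  have h2 := congrArg Prod.snd h1
  have hmem : cs.simple i ∈ cs.rightInvSeq ω := by
    by_contra hn
    simp [List.count_eq_zero.2 hn] at h2
  obtain ⟨j, hj, e⟩ := List.mem_iff_getElem.1 hmem
  refine ⟨j, by simpa using hj, ?_⟩
  rw [← wordProd_mul_getD_rightInvSeq, List.getD_eq_getElem _ 1 hj, e]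

/-- The exchange condition for a product of two words. -/
theorem exchange_append (ω₁ ω₂ : List B) (i : B)
    (h : cs.length (cs.wordProd ω₁ * cs.wordProd ω₂ * cs.simple i) <
      cs.length (cs.wordProd ω₁ * cs.wordProd ω₂)) :
    (∃ j < ω₁.length, cs.wordProd ω₁ * cs.wordProd ω₂ * cs.simple i =
        cs.wordProd (ω₁.eraseIdx j) * cs.wordProd ω₂) ∨
    (∃ j < ω₂.length, cs.wordProd ω₂ * cs.simple i = cs.wordProd (ω₂.eraseIdx j)) := by
  rw [← wordProd_append] at h ⊢
  obtain ⟨j, hj, e⟩ := cs.exchange _ i h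
  rcases lt_or_ge j ω₁.length with hlt | hge
  · left
    refine ⟨j, hlt, ?_⟩
    rw [e, List.eraseIdx_append_of_lt_length hlt, wordProd_append]
  · right
    refine ⟨j - ω₁.length, by rw [List.length_append] at hj; omega, ?_⟩
    rw [List.eraseIdx_append_of_length_le hge, wordProd_append, wordProd_append, mul_assoc] at e
    exact mul_left_cancel e

/-- If every simple reflection is a right descent of `w`, then every `u` occurs as a suffix of a
reduced expression of `w`. -/
theorem length_mul_inv_add_of_forall_isRightDescent {w : W}
    (hw : ∀ i, cs.IsRightDescent w i) (u : W) :
    cs.length (w * u⁻¹) + cs.length u = cs.length w := by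
  obtain ⟨ω, hω, rfl⟩ := cs.exists_isReduced u
  induction ω using List.reverseRecOn with
  | nil => simp
  | append_singleton ω i ih =>
    have hred : cs.IsReduced ω := by simpa using hω.take ω.length
    have ih := ih hred
    obtain ⟨ν, hν, hwν⟩ := cs.exists_isReduced (w * (cs.wordProd ω)⁻¹)
    have e : cs.wordProd ν * cs.wordProd ω = w := by rw [← hwν]; simp
    have hd := hw i
    rw [IsRightDescent, ← e] at hd
    rcases cs.exchange_append ν ω i hd with ⟨j, hj, h1⟩ | ⟨j, hj, h1⟩
    · rw [e] at h1
      have h2 : w * (cs.wordProd (ω ++ [i]))⁻¹ = cs.wordProd (ν.eraseIdx j) := by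
        rw [wordProd_append, wordProd_singleton, mul_inv_rev, inv_simple, ← mul_assoc, h1]
        simp
      have h3 := cs.length_wordProd_le (ν.eraseIdx j)
      have h4 := List.length_eraseIdx_add_one hj
      have h5 := cs.length_le_length_mul_add_right w (cs.wordProd (ω ++ [i]))⁻¹
      rw [length_inv, h2] at h5
      rw [h2]
      rw [hwν, hν.eq, hred.eq] at ih
      have h6 := hω.eq
      rw [List.length_append, List.length_singleton] at h6
      omega
    · exfalso
      have h6 := hω.eq
      rw [wordProd_append, wordProd_singleton, h1, List.length_append] at h6
      have h3 := cs.length_wordProd_le (ω.eraseIdx j)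
      have h4 := List.length_eraseIdx_add_one hj
      omega

theorem eq_of_forall_isRightDescent {w u : W} (hw : ∀ i, cs.IsRightDescent w i)
    (hu : ∀ i, cs.IsRightDescent u i) : w = u := by
  have h1 := cs.length_mul_inv_add_of_forall_isRightDescent hw u
  have h2 := cs.length_mul_inv_add_of_forall_isRightDescent hu w
  have h3 : cs.length (w * u⁻¹) = 0 := by omega
  rw [length_eq_zero_iff] at h3
  exact mul_inv_eq_one.1 h3

/-- Elements of a standard parabolic subgroup are represented by positive words. -/
theorem exists_word_of_mem_closure {T : Set B} {u : W}
    (hu : u ∈ Subgroup.closure (cs.simple '' T)) :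
    ∃ ω : List B, (∀ i ∈ ω, i ∈ T) ∧ ω.length = wordLength (cs.simple '' T) u ∧
      cs.wordProd ω = u := by
  obtain ⟨w, hw, hT, rfl⟩ := exists_geodesic hu
  have : w ∈ Set.range (List.map (fun i : T => cs.simple i)) := by
    rw [Set.range_list_map]
    intro a ha
    rcases hT a ha with ⟨i, hi, rfl⟩ | ⟨i, hi, e⟩
    · exact ⟨⟨i, hi⟩, rfl⟩
    · refine ⟨⟨i, hi⟩, ?_⟩
      rw [← inv_inv a, ← e]
      simp
  obtain ⟨ω, rfl⟩ := this
  refine ⟨ω.map Subtype.val, ?_, by simpa using hw, ?_⟩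
  · intro i hi
    obtain ⟨j, -, rfl⟩ := List.mem_map.1 hi
    exact j.2
  · simp [wordProd]

theorem wordProd_mem_closure {T : Set B} {ω : List B} (hω : ∀ i ∈ ω, i ∈ T) :
    cs.wordProd ω ∈ Subgroup.closure (cs.simple '' T) := by
  refine list_prod_mem fun a ha => ?_
  obtain ⟨i, hi, rfl⟩ := List.mem_map.1 ha
  exact Subgroup.subset_closure ⟨i, hω i hi, rfl⟩

theorem wordLength_wordProd_le {T : Set B} {ω : List B} (hω : ∀ i ∈ ω, i ∈ T) :
    wordLength (cs.simple '' T) (cs.wordProd ω) ≤ ω.length := by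
  rw [← List.length_map cs.simple]
  refine wordLength_prod_le _ fun a ha => ?_
  obtain ⟨i, hi, rfl⟩ := List.mem_map.1 ha
  exact Or.inl ⟨i, hω i hi, rfl⟩

/-- If `a` is of minimal length in its coset `a W_T`, then `ℓ(au) = ℓ(a) + ℓ_T(u)` for all
`u ∈ W_T`. -/
theorem length_mul_of_minimal {T : Set B} {a : W}
    (ha : ∀ u ∈ Subgroup.closure (cs.simple '' T), cs.length a ≤ cs.length (a * u))
    {u : W} (hu : u ∈ Subgroup.closure (cs.simple '' T)) :
    cs.length (a * u) = cs.length a + wordLength (cs.simple '' T) u := by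
  obtain ⟨ω, hωT, hω, rfl⟩ := cs.exists_word_of_mem_closure hu
  rw [← hω]
  clear hu
  induction ω using List.reverseRecOn with
  | nil => simp
  | append_singleton ω i ih =>
    have hωT' : ∀ j ∈ ω, j ∈ T := fun j hj => hωT j (by simp [hj])
    have hi : i ∈ T := hωT i (by simp)
    have hle := cs.wordLength_wordProd_le hωT'
    have key : ∀ ω' : List B, (∀ j ∈ ω', j ∈ T) →
        cs.wordProd ω' = cs.wordProd (ω ++ [i]) → ω.length + 1 ≤ ω'.length := by
      intro ω' h1 h2
      have := cs.wordLength_wordProd_le h1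
      rw [h2, ← hω] at this
      simpa using this
    have hω' : ω.length = wordLength (cs.simple '' T) (cs.wordProd ω) := by
      obtain ⟨ω', h1, h2, h3⟩ := cs.exists_word_of_mem_closure (cs.wordProd_mem_closure hωT')
      have := key (ω' ++ [i]) (by
        intro j hj
        rcases List.mem_append.1 hj with h | h
        · exact h1 j h
        · rw [List.mem_singleton.1 h]; exact hi)
        (by rw [wordProd_append, wordProd_append, h3])
      rw [List.length_append, List.length_singleton] at this
      omega
    have ih := ih hωT' hω'
    rw [wordProd_append, wordProd_singleton, List.length_append, List.length_singleton,
      ← mul_assoc]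
    rcases cs.length_mul_simple (a * cs.wordProd ω) i with h | h
    · rw [h, ih, add_assoc]
    · exfalso
      obtain ⟨α, hα, hαa⟩ := cs.exists_isReduced a
      have hlen : cs.length (a * cs.wordProd ω * cs.simple i) < cs.length (a * cs.wordProd ω) := by
        omega
      rw [hαa] at hlen
      rcases cs.exchange_append α ω i hlen with ⟨j, hj, e⟩ | ⟨j, hj, e⟩
      · have h1 : cs.wordProd (α.eraseIdx j) =
            a * (cs.wordProd ω * cs.simple i * (cs.wordProd ω)⁻¹) := by
          rw [hαa, ← mul_assoc, ← mul_assoc, e]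
          simp
        have h2 := ha (cs.wordProd ω * cs.simple i * (cs.wordProd ω)⁻¹)
          (mul_mem (mul_mem (cs.wordProd_mem_closure hωT')
            (Subgroup.subset_closure ⟨i, hi, rfl⟩)) (inv_mem (cs.wordProd_mem_closure hωT')))
        rw [← h1] at h2
        have h3 := cs.length_wordProd_le (α.eraseIdx j)
        have h4 := List.length_eraseIdx_add_one hj
        have h5 := hα.eq
        rw [← hαa] at h5
        omega
      · have := key (ω.eraseIdx j) (fun k hk => hωT' k (List.mem_of_mem_eraseIdx hk))
          (by rw [wordProd_append, wordProd_singleton, e])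
        have h4 := List.length_eraseIdx_add_one hj
        omega

/-- Length in a standard parabolic subgroup agrees with the length in `W`. -/
theorem length_eq_wordLength {T : Set B} {u : W}
    (hu : u ∈ Subgroup.closure (cs.simple '' T)) :
    cs.length u = wordLength (cs.simple '' T) u := by
  simpa using cs.length_mul_of_minimal (T := T) (a := 1) (by simp) hu

theorem length_eq_wordLength_range (u : W) :
    cs.length u = wordLength (Set.range cs.simple) u := by
  rw [← Set.image_univ]
  apply cs.length_eq_wordLength
  rw [Set.image_univ, cs.subgroup_closure_range_simple]
  trivial

/-- Elements without right descents in `T`: the minimal coset representatives of `W / W_T`. -/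
def minReps (T : Set B) : Set W := {w | ∀ i ∈ T, ¬ cs.IsRightDescent w i}

theorem exists_minimal_decomp (T : Set B) (w : W) :
    ∃ a, (∀ u ∈ Subgroup.closure (cs.simple '' T), cs.length a ≤ cs.length (a * u)) ∧
      ∃ u ∈ Subgroup.closure (cs.simple '' T), a * u = w := by
  let P : Set ℕ := {n | ∃ u ∈ Subgroup.closure (cs.simple '' T), cs.length (w * u) = n}
  have hP : P.Nonempty := ⟨_, 1, one_mem _, rfl⟩
  obtain ⟨u, hu, hlen⟩ := Nat.sInf_mem hP
  refine ⟨w * u, fun v hv => ?_, u⁻¹, inv_mem hu, by simp⟩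
  rw [hlen]
  exact Nat.sInf_le ⟨u * v, mul_mem hu hv, by rw [mul_assoc]⟩

theorem minimal_of_mem_minReps {T : Set B} {w : W} (hw : w ∈ cs.minReps T) :
    ∀ u ∈ Subgroup.closure (cs.simple '' T), cs.length w ≤ cs.length (w * u) := by
  obtain ⟨a, ha, u, hu, rfl⟩ := cs.exists_minimal_decomp T w
  obtain ⟨ω, hT, hω, rfl⟩ := cs.exists_word_of_mem_closure hu
  rcases List.eq_nil_or_concat ω with rfl | ⟨ω', i, rfl⟩
  · simpa using ha
  · exfalso
    rw [List.concat_eq_append] at *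
    have hT' : ∀ j ∈ ω', j ∈ T := fun j hj => hT j (by simp [hj])
    refine hw i (hT i (by simp)) ?_
    rw [IsRightDescent, cs.length_mul_of_minimal ha hu, ← hω, wordProd_append,
      wordProd_singleton, mul_assoc, simple_mul_simple_cancel_right,
      cs.length_mul_of_minimal ha (cs.wordProd_mem_closure hT')]
    have := cs.wordLength_wordProd_le hT'
    simp
    omega

/-- The factorisation `W(t) = W^T(t) W_T(t)`. -/
theorem growthSeries_eq_minReps_mul [Finite W] (T : Set B) :
    growthSeries (Set.range cs.simple) (Set.univ : Set W) =
      lenSeries (cs.minReps T) cs.length *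
        growthSeries (cs.simple '' T) (Subgroup.closure (cs.simple '' T) : Set W) := by
  have h0 : wordLength (Set.range cs.simple) = cs.length :=
    funext fun u => (cs.length_eq_wordLength_range u).symm
  rw [growthSeries_eq_lenSeries, growthSeries_eq_lenSeries, h0]
  refine lenSeries_mul (fun p => p.1 * p.2) ⟨fun _ _ => trivial, ?_, ?_⟩
    (fun a ha u hu => cs.length_mul_of_minimal (cs.minimal_of_mem_minReps ha) hu)
    (fun _ => Set.toFinite _) (fun _ => Set.toFinite _)
  · rintro ⟨a, u⟩ ⟨ha, hu⟩ ⟨b, v⟩ ⟨hb, hv⟩ e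
    simp only at ha hu hb hv e
    have ha' := cs.minimal_of_mem_minReps ha
    have hb' := cs.minimal_of_mem_minReps hb
    have hz : u * v⁻¹ ∈ Subgroup.closure (cs.simple '' T) := mul_mem hu (inv_mem hv)
    have e1 : a * (u * v⁻¹) = b := by rw [← mul_assoc, e]; simp
    have h1 := cs.length_mul_of_minimal ha' hz
    have h2 := hb' (u * v⁻¹)⁻¹ (inv_mem hz)
    rw [← e1, mul_inv_cancel_right, h1] at h2
    have h3 : u * v⁻¹ = 1 := (wordLength_eq_zero_iff hz).1 (by omega)
    obtain rfl := mul_inv_eq_one.1 h3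
    rw [mul_right_cancel e]
  · intro w _
    obtain ⟨a, ha, u, hu, rfl⟩ := cs.exists_minimal_decomp T w
    refine ⟨(a, u), ⟨fun i hi hd => ?_, hu⟩, rfl⟩
    have := ha (cs.simple i) (Subgroup.subset_closure ⟨i, hi, rfl⟩)
    exact absurd hd (not_lt.2 this)

/-- The signed count of the sets `T` avoiding the right descents of `w` vanishes unless every
simple reflection is a right descent, which singles out the longest element. -/
theorem sum_lenSeries_minReps [Fintype B] [Finite W] (w₀ : W)
    (hw₀ : ∀ w, cs.length w ≤ cs.length w₀) :
    ∑ T : Finset B, (-1 : PowerSeries ℤ) ^ T.card * lenSeries (cs.minReps (T : Set B)) cs.length =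
      (PowerSeries.X : PowerSeries ℤ) ^ cs.length w₀ := by
  have := Fintype.ofFinite W
  have hlong : ∀ w, (∀ i, cs.IsRightDescent w i) ↔ w = w₀ := by
    have h0 : ∀ i, cs.IsRightDescent w₀ i := fun i =>
      lt_of_le_of_ne (hw₀ _) (cs.length_mul_simple_ne _ _)
    exact fun w => ⟨fun h => cs.eq_of_forall_isRightDescent h h0, fun h => h ▸ h0⟩
  have hser : ∀ T : Finset B, lenSeries (cs.minReps (T : Set B)) cs.length =
      ∑ w : W, if T ⊆ Finset.univ.filter (fun i => ¬ cs.IsRightDescent w i) then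
        (PowerSeries.X : PowerSeries ℤ) ^ cs.length w else 0 := by
    intro T
    ext n
    simp only [lenSeries, PowerSeries.coeff_mk, map_sum, apply_ite (PowerSeries.coeff n),
      PowerSeries.coeff_X_pow, map_zero]
    rw [Set.ncard_eq_toFinset_card', Finset.card_eq_sum_ones, ← Finset.sum_filter,
      Finset.sum_ite, Finset.filter_filter]
    simp only [Finset.sum_const_zero, add_zero]
    push_cast
    refine Finset.sum_congr ?_ fun _ _ => rfl
    ext w
    simp [minReps, Finset.subset_iff, eq_comm]
  have hsum : ∀ w : W, ∑ T : Finset B, (-1 : PowerSeries ℤ) ^ T.card *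
      (if T ⊆ Finset.univ.filter (fun i => ¬ cs.IsRightDescent w i) then
        (PowerSeries.X : PowerSeries ℤ) ^ cs.length w else 0) =
      if w = w₀ then (PowerSeries.X : PowerSeries ℤ) ^ cs.length w else 0 := by
    intro w
    simp only [mul_ite, mul_zero]
    rw [← Finset.sum_filter]
    have hpow : (Finset.univ.filter fun T : Finset B =>
        T ⊆ Finset.univ.filter (fun i => ¬ cs.IsRightDescent w i)) =
        (Finset.univ.filter (fun i => ¬ cs.IsRightDescent w i)).powerset := by
      ext T; simp
    have hcast := congrArg (Int.castRingHom (PowerSeries ℤ))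
      (Finset.sum_powerset_neg_one_pow_card
        (x := Finset.univ.filter (fun i => ¬ cs.IsRightDescent w i)))
    rw [hpow, ← Finset.sum_mul]
    have hiff : (Finset.univ.filter (fun i => ¬ cs.IsRightDescent w i)) = ∅ ↔ w = w₀ := by
      rw [← hlong, Finset.filter_eq_empty_iff]
      simp
    simp only [map_sum, map_pow, map_neg, map_one, hiff] at hcast
    rw [hcast]
    split_ifs <;> simp
  simp only [hser, Finset.mul_sum]
  rw [Finset.sum_comm, Finset.sum_congr rfl fun w _ => hsum w]
  simp

/-- The alternating sum formula for a finite Coxeter group with longest element `w₀`. -/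
theorem sum_inverse_growthSeries [Fintype B] [Finite W] (w₀ : W)
    (hw₀ : ∀ w, cs.length w ≤ cs.length w₀) :
    ∑ T : Finset B, (-1 : PowerSeries ℤ) ^ T.card *
      Ring.inverse (growthSeries (cs.simple '' (T : Set B))
        (Subgroup.closure (cs.simple '' (T : Set B)) : Set W)) =
      (PowerSeries.X : PowerSeries ℤ) ^ cs.length w₀ *
        Ring.inverse (growthSeries (Set.range cs.simple) (Set.univ : Set W)) := by
  have hunit : IsUnit (growthSeries (Set.range cs.simple) (Set.univ : Set W)) := by
    have := isUnit_growthSeries (Set.range cs.simple)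
    rwa [cs.subgroup_closure_range_simple] at this
  rw [Ring.eq_mul_inverse_iff_mul_eq _ _ _ hunit, Finset.sum_mul,
    ← cs.sum_lenSeries_minReps w₀ hw₀]
  refine Finset.sum_congr rfl fun T _ => ?_
  rw [cs.growthSeries_eq_minReps_mul T, mul_assoc, mul_comm (lenSeries _ _), ← mul_assoc,
    ← mul_assoc, mul_assoc ((-1 : PowerSeries ℤ) ^ T.card),
    Ring.inverse_mul_cancel _ (isUnit_growthSeries _), mul_one]

end CoxeterSystem

end Coxeter

/-! ### Cyclic groups -/

section Cyclic

variable {G : Type*} [Group G]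

theorem wordLength_zpow_le (g : G) (z : ℤ) : wordLength {g} (g ^ z) ≤ z.natAbs := by
  rcases Int.natAbs_eq z with h | h
  · have := wordLength_prod_le (S := {g}) (List.replicate z.natAbs g)
      (fun a ha => by rw [List.eq_of_mem_replicate ha]; simp)
    rw [List.prod_replicate, List.length_replicate] at this
    have e : g ^ z = g ^ z.natAbs := by rw [← zpow_natCast, ← h]
    rwa [e]
  · have := wordLength_prod_le (S := {g}) (List.replicate z.natAbs g⁻¹)
      (fun a ha => by rw [List.eq_of_mem_replicate ha]; simp)
    rw [List.prod_replicate, List.length_replicate] at this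
    have e : g ^ z = g⁻¹ ^ z.natAbs := by
      rw [inv_pow, ← zpow_natCast, ← zpow_neg, ← h]
    rwa [e]

theorem exists_zpow_of_mem_closure {g h : G} (hh : h ∈ Subgroup.closure {g}) :
    ∃ z : ℤ, z.natAbs = wordLength {g} h ∧ g ^ z = h := by
  obtain ⟨w, hw, hg, rfl⟩ := exists_geodesic hh
  have : ∀ w : List G, (∀ a ∈ w, a ∈ ({g} : Set G) ∪ {g}⁻¹) →
      ∃ z : ℤ, z.natAbs ≤ w.length ∧ g ^ z = w.prod := by
    intro w
    induction w with
    | nil => exact fun _ => ⟨0, by simp, by simp⟩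
    | cons a w ih =>
      intro h
      obtain ⟨z, hz, e⟩ := ih fun b hb => h b (List.mem_cons_of_mem _ hb)
      rcases h a List.mem_cons_self with ha | ha
      · refine ⟨1 + z, by rw [List.length_cons]; omega, ?_⟩
        rw [zpow_add, e, List.prod_cons, zpow_one, Set.mem_singleton_iff.1 ha]
      · refine ⟨-1 + z, by rw [List.length_cons]; omega, ?_⟩
        rw [zpow_add, e, List.prod_cons, zpow_neg_one, ← Set.mem_singleton_iff.1 ha, inv_inv]
  obtain ⟨z, hz, e⟩ := this w hg
  refine ⟨z, le_antisymm (hz.trans hw.le) ?_, e⟩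
  rw [← e]
  exact wordLength_zpow_le g z

theorem wordLength_zpow (g : G) (z : ℤ) (h : orderOf g = 0 ∨ 2 * z.natAbs ≤ orderOf g) :
    wordLength {g} (g ^ z) = z.natAbs := by
  obtain ⟨y, hy, e⟩ := exists_zpow_of_mem_closure (g := g) (h := g ^ z)
    (zpow_mem (Subgroup.mem_closure_singleton_self g) z)
  have hle := wordLength_zpow_le g z
  have hdvd := orderOf_dvd_sub_iff_zpow_eq_zpow.2 e
  refine le_antisymm hle (not_lt.1 fun hlt => ?_)
  rw [← hy] at hlt
  rcases h with h | h
  · rw [h] at hdvd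
    have : y - z = 0 := by simpa using hdvd
    omega
  · have := Int.le_of_dvd (a := (orderOf g : ℤ)) (b := |y - z|)
      (abs_pos.2 (by omega)) ((dvd_abs _ _).2 hdvd)
    rw [Int.abs_eq_natAbs] at this
    omega

theorem wordLength_zpow_lt (g : G) (z : ℤ) (h0 : orderOf g ≠ 0) (h : orderOf g < 2 * z.natAbs) :
    wordLength {g} (g ^ z) < z.natAbs := by
  rcases le_total 0 z with hz | hz
  · have e : g ^ (z - orderOf g) = g ^ z := by simp [zpow_sub]
    have := wordLength_zpow_le g (z - orderOf g)
    rw [e] at this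
    omega
  · have e : g ^ (z + orderOf g) = g ^ z := by simp [zpow_add]
    have := wordLength_zpow_le g (z + orderOf g)
    rw [e] at this
    omega

/-- The sphere of radius `k` in a cyclic group is `{gᵏ, g⁻ᵏ}` as long as `2k` does not exceed the
order of `g`, and is empty beyond; order `0` stands for infinite order. -/
theorem coeff_growthSeries_cyclic (g : G) (k : ℕ) :
    PowerSeries.coeff k (growthSeries {g} (Subgroup.closure {g} : Set G)) =
      if k = 0 then 1 else if orderOf g = 0 ∨ 2 * k < orderOf g then 2
        else if 2 * k = orderOf g then 1 else 0 := by
  rw [growthSeries, PowerSeries.coeff_mk]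
  by_cases hk : orderOf g = 0 ∨ 2 * k ≤ orderOf g
  · have hset : {h ∈ (Subgroup.closure {g} : Set G) | wordLength {g} h = k} =
        {g ^ (k : ℤ), g ^ (-k : ℤ)} := by
      ext h
      constructor
      · rintro ⟨hh, hl⟩
        obtain ⟨z, hz, rfl⟩ := exists_zpow_of_mem_closure hh
        rw [hl] at hz
        rcases Int.natAbs_eq z with e | e
        · left; rw [e, hz]
        · right; rw [Set.mem_singleton_iff, e, hz]
      · rintro (rfl | rfl)
        · exact ⟨zpow_mem (Subgroup.mem_closure_singleton_self g) _, by
            rw [wordLength_zpow _ _ (by simpa using hk)]; simp⟩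
        · exact ⟨zpow_mem (Subgroup.mem_closure_singleton_self g) _, by
            rw [wordLength_zpow _ _ (by simpa using hk)]; simp⟩
    rw [hset]
    have heq : g ^ (k : ℤ) = g ^ (-k : ℤ) ↔ orderOf g ∣ 2 * k := by
      rw [← orderOf_dvd_sub_iff_zpow_eq_zpow, ← Int.natCast_dvd_natCast]
      push_cast
      rw [sub_neg_eq_add, two_mul]
    by_cases hd : orderOf g ∣ 2 * k
    · rw [heq.2 hd, Set.pair_eq_singleton, Set.ncard_singleton]
      rcases Nat.eq_zero_or_pos k with rfl | hpos
      · simp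
      · have := Nat.le_of_dvd (by omega) hd
        have h0 : orderOf g ≠ 0 := fun h => by rw [h] at hd; simp at hd; omega
        rw [if_neg (by omega), if_neg (by omega), if_pos (by omega)]
        rfl
    · rw [Set.ncard_pair (fun h => hd (heq.1 h))]
      have h1 : k ≠ 0 := by rintro rfl; simp at hd
      have h2 : 2 * k ≠ orderOf g := fun h => hd (h ▸ dvd_rfl)
      rw [if_neg h1, if_pos (by omega)]
      rfl
  · have hset : {h ∈ (Subgroup.closure {g} : Set G) | wordLength {g} h = k} = ∅ := by
      rw [Set.eq_empty_iff_forall_notMem]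
      rintro h ⟨hh, hl⟩
      obtain ⟨z, hz, rfl⟩ := exists_zpow_of_mem_closure hh
      have := wordLength_zpow_lt g z (by omega) (by omega)
      omega
    rw [hset, if_neg (by omega), if_neg (by omega), if_neg (by omega)]
    simp

theorem growthSeries_cyclic_of_orderOf_pos (g : G) (h : orderOf g ≠ 0) :
    growthSeries {g} (Subgroup.closure {g} : Set G) = 1 + Ppoly (orderOf g) := by
  ext k
  have htwo : ∀ i : ℕ, PowerSeries.coeff k (2 * (PowerSeries.X : PowerSeries ℤ) ^ i) =
      if k = i then 2 else 0 := by
    intro i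
    rw [show (2 : PowerSeries ℤ) = PowerSeries.C 2 by simp, PowerSeries.coeff_C_mul,
      PowerSeries.coeff_X_pow]
    simp
  rw [coeff_growthSeries_cyclic, map_add, PowerSeries.coeff_one, Ppoly]
  split_ifs <;>
    simp only [map_add, map_sum, htwo, PowerSeries.coeff_X_pow, Finset.sum_ite_eq,
      Finset.mem_Ico, Finset.mem_Icc] <;> split_ifs <;> omega

theorem inverse_one_sub_X :
    Ring.inverse (1 - (PowerSeries.X : PowerSeries ℤ)) = PowerSeries.mk 1 := by
  have h := PowerSeries.mk_one_mul_one_sub_eq_one ℤ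
  have hu : IsUnit (1 - (PowerSeries.X : PowerSeries ℤ)) := IsUnit.of_mul_eq_one_right _ h
  rw [← one_mul (Ring.inverse _), eq_comm, Ring.eq_mul_inverse_iff_mul_eq _ _ _ hu, h]

theorem growthSeries_cyclic_of_orderOf_zero (g : G) (h : orderOf g = 0) :
    growthSeries {g} (Subgroup.closure {g} : Set G) =
      1 + 2 * PowerSeries.X * Ring.inverse (1 - (PowerSeries.X : PowerSeries ℤ)) := by
  have h1 : growthSeries {g} (Subgroup.closure {g} : Set G) =
      PowerSeries.C 2 * (PowerSeries.mk 1 : PowerSeries ℤ) - 1 := by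
    ext k
    rw [coeff_growthSeries_cyclic, map_sub, PowerSeries.coeff_C_mul, PowerSeries.coeff_mk,
      PowerSeries.coeff_one]
    split_ifs <;> simp_all
  have h2 := PowerSeries.mk_one_mul_one_sub_eq_one ℤ
  have h3 : (PowerSeries.C 2 : PowerSeries ℤ) = 2 := by simp
  rw [h1, inverse_one_sub_X, h3]
  linear_combination 2 * h2

end Cyclic

/-! ### Dyer groups of spherical type -/

section Dyer

namespace DyerGraph

variable {V : Type*} (Γ : DyerGraph V)

/-- For involutions `a = θ(x)` and `b = θ(y)`, the braid relation of length `n` is `(ab)ⁿ = 1`. -/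
theorem map_altWord_mul_inv {G : Type*} [Group G] (θ : FreeGroup V →* G) (n : ℕ) :
    ∀ x y : V, θ (FreeGroup.of x) * θ (FreeGroup.of x) = 1 →
      θ (FreeGroup.of y) * θ (FreeGroup.of y) = 1 →
      θ (altWord x y n * (altWord y x n)⁻¹) = (θ (FreeGroup.of x) * θ (FreeGroup.of y)) ^ n := by
  induction n with
  | zero => intro x y _ _; simp [altWord]
  | succ n ih =>
    intro x y hx hy
    have h1 := ih y x hy hx
    have h2 : (θ (FreeGroup.of y))⁻¹ = θ (FreeGroup.of y) := inv_eq_of_mul_eq_one_right hy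
    simp only [altWord, map_mul, map_inv, mul_inv_rev] at h1 ⊢
    rw [h2, mul_assoc, ← mul_assoc (θ (altWord y x n)), h1]
    generalize θ (FreeGroup.of x) = a
    generalize θ (FreeGroup.of y) = b
    clear * -
    induction n with
    | zero => simp
    | succ n ih => rw [pow_succ' (b * a), pow_succ' (a * b) (n + 1), ← ih]; simp only [mul_assoc]

theorem map_altWord_two {G : Type*} [Group G] (θ : FreeGroup V →* G) (x y : V) :
    θ (altWord x y 2 * (altWord y x 2)⁻¹) = 1 ↔
      Commute (θ (FreeGroup.of x)) (θ (FreeGroup.of y)) := by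
  rw [map_mul, map_inv, mul_inv_eq_one]
  simp [altWord, Commute, SemiconjBy]

variable {Γ}

theorem m_eq_two {x y : V} (h : Γ.Adj x y) (hx : x ∉ Γ.V2) : Γ.m x y = 2 := by
  by_contra hm
  exact hx (Γ.compat h hm).1

theorem m_eq_two' {x y : V} (h : Γ.Adj x y) (hy : y ∉ Γ.V2) : Γ.m x y = 2 := by
  by_contra hm
  exact hy (Γ.compat h hm).2

theorem mk_rel {r : FreeGroup V} (hr : r ∈ Γ.rels) : PresentedGroup.mk Γ.rels r = 1 :=
  PresentedGroup.one_of_mem hr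

variable (Γ) in
theorem gen_pow (x : V) : Γ.gen x ^ (Γ.f x).toNat = 1 := by
  by_cases h : Γ.f x = ⊤
  · simp [h]
  · exact mk_rel (Γ := Γ) (Or.inl ⟨x, h, rfl⟩)

theorem gen_mul_self {x : V} (hx : x ∈ Γ.V2) : Γ.gen x * Γ.gen x = 1 := by
  have h := Γ.gen_pow x
  have h2 : Γ.f x = 2 := hx
  rw [h2] at h
  rw [← pow_two]
  exact h

theorem commute_gen {x y : V} (h : Γ.Adj x y) (hx : x ∉ Γ.V2) :
    Commute (Γ.gen x) (Γ.gen y) := by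
  have := mk_rel (Γ := Γ) (Or.inr ⟨x, y, h, rfl⟩)
  rw [m_eq_two h hx] at this
  exact (map_altWord_two (PresentedGroup.mk Γ.rels) x y).1 this

/-- For a vertex `x` outside `V₂`, the projection of the Dyer group onto the cyclic factor
generated by `x`, written as `ZMod (f x)` (with `ZMod 0 = ℤ` when `f x = ∞`). -/
noncomputable def cyclicProj (x : V) (hx : x ∉ Γ.V2) :
    Γ.DyerGroup →* Multiplicative (ZMod (Γ.f x).toNat) :=
  PresentedGroup.toGroup
    (f := fun y => if y = x then Multiplicative.ofAdd (1 : ZMod (Γ.f x).toNat) else 1) (by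
    rintro r (⟨y, hy, rfl⟩ | ⟨y, z, hyz, rfl⟩)
    · rw [map_pow, FreeGroup.lift_apply_of]
      split_ifs with h
      · subst h
        rw [← ofAdd_nsmul]
        simp
      · simp
    · by_cases hxx : x = y ∨ x = z
      · have hm : Γ.m y z = 2 := by
          rcases hxx with rfl | rfl
          · exact m_eq_two hyz hx
          · exact m_eq_two' hyz hx
        rw [hm, map_altWord_two]
        exact Commute.all _ _
      · rw [not_or] at hxx
        rw [map_altWord_mul_inv] <;> simp [Ne.symm hxx.1, Ne.symm hxx.2])

theorem cyclicProj_gen_self (x : V) (hx : x ∉ Γ.V2) :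
    cyclicProj x hx (Γ.gen x) = Multiplicative.ofAdd 1 := by
  rw [cyclicProj, gen, PresentedGroup.toGroup.of]
  simp

theorem cyclicProj_gen_of_ne {x y : V} (hx : x ∉ Γ.V2) (hy : y ≠ x) :
    cyclicProj x hx (Γ.gen y) = 1 := by
  rw [cyclicProj, gen, PresentedGroup.toGroup.of]
  simp [hy]

theorem orderOf_gen {x : V} (hx : x ∉ Γ.V2) : orderOf (Γ.gen x) = (Γ.f x).toNat := by
  refine Nat.dvd_antisymm (orderOf_dvd_of_pow_eq_one (Γ.gen_pow x)) ?_
  have h := orderOf_map_dvd (cyclicProj x hx) (Γ.gen x)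
  rwa [cyclicProj_gen_self, orderOf_ofAdd_eq_addOrderOf, ZMod.addOrderOf_one] at h

/-- The projection `cyclicProj` kills `D_Y` and is injective on the cyclic group at `x`. -/
theorem disjoint_closure_gen {x : V} (hx : x ∉ Γ.V2) {Y : Set V} (hY : x ∉ Y) :
    Disjoint (Subgroup.closure (Γ.gen '' Y)) (Subgroup.closure {Γ.gen x}) := by
  rw [Subgroup.disjoint_def]
  intro g hg hgx
  have h1 : Subgroup.closure (Γ.gen '' Y) ≤ (cyclicProj x hx).ker := by
    rw [Subgroup.closure_le]
    rintro _ ⟨y, hy, rfl⟩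
    exact cyclicProj_gen_of_ne hx (fun h => hY (h ▸ hy))
  obtain ⟨z, rfl⟩ := Subgroup.mem_closure_singleton.1 hgx
  have h2 : cyclicProj x hx (Γ.gen x ^ z) = 1 := h1 hg
  rw [map_zpow, cyclicProj_gen_self, ← orderOf_dvd_iff_zpow_eq_one,
    orderOf_ofAdd_eq_addOrderOf, ZMod.addOrderOf_one] at h2
  rwa [← orderOf_dvd_iff_zpow_eq_one, orderOf_gen hx]

/-- The nontrivial part `𝒢 - 1` of the growth series of the cyclic factor at a vertex outside
`V₂`. -/
noncomputable def cyclicPart (Γ : DyerGraph V) (x : V) : PowerSeries ℤ :=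
  if Γ.f x = ⊤ then 2 * PowerSeries.X * Ring.inverse (1 - (PowerSeries.X : PowerSeries ℤ))
  else Ppoly (Γ.f x).toNat

theorem growthSeries_gen {x : V} (hx : x ∉ Γ.V2) :
    growthSeries {Γ.gen x} (Subgroup.closure {Γ.gen x} : Set Γ.DyerGroup) =
      1 + Γ.cyclicPart x := by
  rw [cyclicPart]
  split_ifs with h
  · exact growthSeries_cyclic_of_orderOf_zero _ (by rw [orderOf_gen hx, h]; rfl)
  · have h0 : orderOf (Γ.gen x) ≠ 0 := by
      rw [orderOf_gen hx, Ne, ENat.toNat_eq_zero, not_or]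
      refine ⟨fun h0 => ?_, h⟩
      have := Γ.f_ge x
      rw [h0] at this
      simp at this
    rw [growthSeries_cyclic_of_orderOf_pos _ h0, orderOf_gen hx]

theorem growthSeries_insert [Finite V] (hΓ : Γ.Spherical) {x : V} (hx : x ∉ Γ.V2) {Y : Set V}
    (hY : x ∉ Y) :
    growthSeries (Γ.gen '' insert x Y) (Γ.parabolic (insert x Y) : Set Γ.DyerGroup) =
      growthSeries (Γ.gen '' Y) (Γ.parabolic Y : Set Γ.DyerGroup) * (1 + Γ.cyclicPart x) := by
  have e : Γ.gen '' insert x Y = Γ.gen '' Y ∪ {Γ.gen x} := by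
    rw [Set.image_insert_eq, Set.union_singleton]
  rw [parabolic, parabolic, e, growthSeries_union (Set.toFinite _) (Set.toFinite _) _
    (disjoint_closure_gen hx hY), growthSeries_gen hx]
  rintro _ ⟨y, hy, rfl⟩ _ rfl
  exact (commute_gen (hΓ.1 x y (fun h => hY (h ▸ hy))) hx).symm

/-- The Coxeter matrix of the full subgraph spanned by `V₂`, for a complete Dyer graph. -/
noncomputable def coxeterMatrix (Γ : DyerGraph V) (hΓ : Γ.Spherical) : CoxeterMatrix Γ.V2 where
  M := fun i j => if i = j then 1 else Γ.m i j
  isSymm := Matrix.IsSymm.ext fun i j => by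
    simp only [eq_comm (a := j), Γ.m_symm j i]
  diagonal i := by simp
  off_diagonal i j hij := by
    have := Γ.m_ge (hΓ.1 i j (fun h => hij (Subtype.ext h)))
    rw [if_neg hij]
    omega

/-- The Coxeter system on `V₂`. -/
noncomputable def coxeterSystem (hΓ : Γ.Spherical) :
    CoxeterSystem (Γ.coxeterMatrix hΓ) (Γ.coxeterMatrix hΓ).Group :=
  (Γ.coxeterMatrix hΓ).toCoxeterSystem

theorem isLiftable_gen (hΓ : Γ.Spherical) :
    (Γ.coxeterMatrix hΓ).IsLiftable (fun i : Γ.V2 => Γ.gen i) := by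
  intro i j
  change (Γ.gen i * Γ.gen j) ^ (if i = j then 1 else Γ.m i j) = 1
  split_ifs with h
  · subst h
    rw [pow_one, gen_mul_self i.2]
  · have hadj := hΓ.1 i j (fun e => h (Subtype.ext e))
    have := mk_rel (Γ := Γ) (Or.inr ⟨i, j, hadj, rfl⟩)
    rwa [map_altWord_mul_inv (PresentedGroup.mk Γ.rels) _ _ _ (gen_mul_self i.2)
      (gen_mul_self j.2)] at this

/-- The embedding of the Coxeter group on `V₂` into the Dyer group. -/
noncomputable def coxeterEmb (hΓ : Γ.Spherical) : (Γ.coxeterMatrix hΓ).Group →* Γ.DyerGroup :=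
  (coxeterSystem hΓ).lift ⟨_, isLiftable_gen hΓ⟩

theorem coxeterEmb_simple (hΓ : Γ.Spherical) (i : Γ.V2) :
    coxeterEmb hΓ ((coxeterSystem hΓ).simple i) = Γ.gen i :=
  (coxeterSystem hΓ).lift_apply_simple _ i

/-- The retraction of the Dyer group onto the Coxeter group on `V₂`. -/
noncomputable def coxeterProj (hΓ : Γ.Spherical) : Γ.DyerGroup →* (Γ.coxeterMatrix hΓ).Group :=
  PresentedGroup.toGroup
    (f := fun y => if h : y ∈ Γ.V2 then (coxeterSystem hΓ).simple ⟨y, h⟩ else 1) (by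
    rintro r (⟨y, hy, rfl⟩ | ⟨y, z, hyz, rfl⟩)
    · rw [map_pow, FreeGroup.lift_apply_of]
      split_ifs with h
      · have h2 : Γ.f y = 2 := h
        rw [h2]
        exact (coxeterSystem hΓ).simple_sq _
      · simp
    · by_cases hy : y ∈ Γ.V2
      · by_cases hz : z ∈ Γ.V2
        · have hne : (⟨y, hy⟩ : Γ.V2) ≠ ⟨z, hz⟩ := fun h =>
            Γ.loopless y (by rw [← Subtype.mk.inj h] at hyz; exact hyz)
          rw [map_altWord_mul_inv] <;> simp only [FreeGroup.lift_apply_of, hy, hz, dif_pos]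
          · have := (coxeterSystem hΓ).simple_mul_simple_pow ⟨y, hy⟩ ⟨z, hz⟩
            change _ ^ (if _ then _ else _) = _ at this
            rwa [if_neg hne] at this
          · exact (coxeterSystem hΓ).simple_mul_simple_self _
          · exact (coxeterSystem hΓ).simple_mul_simple_self _
        · rw [m_eq_two' hyz hz, map_altWord_two]
          simp [hz]
      · rw [m_eq_two hyz hy, map_altWord_two]
        simp [hy])

theorem coxeterEmb_injective (hΓ : Γ.Spherical) : Function.Injective (coxeterEmb hΓ) := by
  have : (coxeterProj hΓ).comp (coxeterEmb hΓ) = MonoidHom.id _ := by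
    refine (coxeterSystem hΓ).ext_simple fun i => ?_
    rw [MonoidHom.comp_apply, coxeterEmb_simple, coxeterProj, gen, PresentedGroup.toGroup.of]
    simp
  exact Function.LeftInverse.injective (g := coxeterProj hΓ) fun w => DFunLike.congr_fun this w

theorem coxeterEmb_image (hΓ : Γ.Spherical) (T : Set Γ.V2) :
    coxeterEmb hΓ '' ((coxeterSystem hΓ).simple '' T) = Γ.gen '' (Subtype.val '' T) := by
  rw [Set.image_image, Set.image_image]
  simp only [coxeterEmb_simple]

theorem coxeterEmb_closure (hΓ : Γ.Spherical) (T : Set Γ.V2) :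
    coxeterEmb hΓ '' (Subgroup.closure ((coxeterSystem hΓ).simple '' T) : Set _) =
      (Γ.parabolic (Subtype.val '' T) : Set Γ.DyerGroup) := by
  rw [parabolic, ← coxeterEmb_image hΓ, ← MonoidHom.map_closure, Subgroup.coe_map]

theorem growthSeries_coxeter (hΓ : Γ.Spherical) (T : Set Γ.V2) :
    growthSeries (Γ.gen '' (Subtype.val '' T))
        (Γ.parabolic (Subtype.val '' T) : Set Γ.DyerGroup) =
      growthSeries ((coxeterSystem hΓ).simple '' T)
        (Subgroup.closure ((coxeterSystem hΓ).simple '' T) : Set _) := by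
  rw [← growthSeries_map (coxeterEmb_injective hΓ), coxeterEmb_image, coxeterEmb_closure]

theorem coxeterEmb_range (hΓ : Γ.Spherical) :
    Set.range (coxeterEmb hΓ) = (Γ.parabolic Γ.V2 : Set Γ.DyerGroup) := by
  have := coxeterEmb_closure hΓ Set.univ
  rwa [Set.image_univ, (coxeterSystem hΓ).subgroup_closure_range_simple, Subgroup.coe_top,
    Set.image_univ, Set.image_univ, Subtype.range_val] at this

variable [Fintype V]

/-- The alternating sum over subsets of `V₂`, transported from the Coxeter group. -/
theorem sum_inverse_growthSeries_V2 (hΓ : Γ.Spherical) {m : ℕ}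
    (hm : IsGreatest {n | ∃ g ∈ Γ.parabolic Γ.V2, wordLength (Γ.gen '' Γ.V2) g = n} m) :
    ∑ Y ∈ (Finset.univ.filter (fun x => x ∈ Γ.V2)).powerset, (-1 : PowerSeries ℤ) ^ Y.card *
        Ring.inverse (growthSeries (Γ.gen '' (↑Y : Set V))
          (Γ.parabolic (↑Y : Set V) : Set Γ.DyerGroup)) =
      (PowerSeries.X : PowerSeries ℤ) ^ m *
        Ring.inverse (growthSeries (Γ.gen '' Γ.V2) (Γ.parabolic Γ.V2 : Set Γ.DyerGroup)) := by
  set cs := coxeterSystem hΓ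
  have hfin : Finite (Γ.coxeterMatrix hΓ).Group := by
    have : Finite (Set.range (coxeterEmb hΓ)) := by
      rw [coxeterEmb_range]
      exact hΓ.2.to_subtype
    exact Finite.of_injective_finite_range (coxeterEmb_injective hΓ)
  have hlen : ∀ w, wordLength (Γ.gen '' Γ.V2) (coxeterEmb hΓ w) = cs.length w := by
    intro w
    have h1 := coxeterEmb_image hΓ Set.univ
    rw [Set.image_univ, Set.image_univ, Subtype.range_val] at h1
    rw [← h1, wordLength_map (coxeterEmb_injective hΓ), ← cs.length_eq_wordLength_range]
  obtain ⟨⟨g, hg, hgm⟩, hmax⟩ := hm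
  rw [← SetLike.mem_coe, ← coxeterEmb_range hΓ] at hg
  obtain ⟨w₀, rfl⟩ := hg
  rw [hlen] at hgm
  have hw₀ : ∀ w, cs.length w ≤ cs.length w₀ := fun w => by
    rw [hgm]
    refine hmax ⟨coxeterEmb hΓ w, ?_, hlen w⟩
    rw [← SetLike.mem_coe, ← coxeterEmb_range hΓ]
    exact ⟨w, rfl⟩
  have key := cs.sum_inverse_growthSeries w₀ hw₀
  have hfull := growthSeries_coxeter hΓ Set.univ
  rw [Set.image_univ, Set.image_univ, Subtype.range_val,
    cs.subgroup_closure_range_simple, Subgroup.coe_top] at hfull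
  rw [hfull, ← hgm, ← key]
  symm
  refine Finset.sum_nbij (fun T => T.map (Function.Embedding.subtype _)) ?_ ?_ ?_ ?_
  · intro T _
    rw [Finset.mem_powerset]
    intro x hx
    obtain ⟨y, -, rfl⟩ := Finset.mem_map.1 hx
    simp
  · exact (Finset.map_injective _).injOn
  · intro Y hY
    refine ⟨Y.subtype (fun x => x ∈ Γ.V2), Finset.mem_coe.2 (Finset.mem_univ _), ?_⟩
    refine Finset.subtype_map_of_mem fun x hx => ?_
    simpa using Finset.mem_powerset.1 (Finset.mem_coe.1 hY) hx
  · intro T _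
    rw [Finset.card_map, Finset.coe_map]
    congr 2
    exact (growthSeries_coxeter hΓ (T : Set Γ.V2)).symm

/-- The alternating sum over subsets of `U ∪ V₂`. Adjoining a vertex `x ∉ V₂` multiplies it by
`1 - 1 / (1 + P_x) = P_x / (1 + P_x)`. -/
theorem sum_inverse_growthSeries_union (hΓ : Γ.Spherical) {m : ℕ}
    (hm : IsGreatest {n | ∃ g ∈ Γ.parabolic Γ.V2, wordLength (Γ.gen '' Γ.V2) g = n} m)
    (U : Finset V) (hU : ∀ x ∈ U, x ∉ Γ.V2) :
    ∑ Y ∈ (U ∪ Finset.univ.filter (fun x => x ∈ Γ.V2)).powerset,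
      (-1 : PowerSeries ℤ) ^ Y.card *
        Ring.inverse (growthSeries (Γ.gen '' (↑Y : Set V))
          (Γ.parabolic (↑Y : Set V) : Set Γ.DyerGroup)) =
      ((PowerSeries.X : PowerSeries ℤ) ^ m * ∏ x ∈ U, Γ.cyclicPart x) *
        Ring.inverse (growthSeries (Γ.gen '' (U ∪ Γ.V2)) (Γ.parabolic (U ∪ Γ.V2) :
          Set Γ.DyerGroup)) := by
  induction U using Finset.induction_on with
  | empty => simpa using sum_inverse_growthSeries_V2 hΓ hm
  | insert x U hxU ih =>
    have hx : x ∉ Γ.V2 := hU x (Finset.mem_insert_self _ _)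
    have ih := ih fun y hy => hU y (Finset.mem_insert_of_mem hy)
    have hx' : x ∉ U ∪ Finset.univ.filter (fun x => x ∈ Γ.V2) := by simp [hxU, hx]
    have hxs : x ∉ (U : Set V) ∪ Γ.V2 := by simp [hxU, hx]
    have hunit : IsUnit (1 + Γ.cyclicPart x) := by
      rw [← growthSeries_gen hx]
      exact isUnit_growthSeries _
    rw [Finset.insert_union, Finset.sum_powerset_insert hx']
    have hstep : ∀ Y ∈ (U ∪ Finset.univ.filter (fun x => x ∈ Γ.V2)).powerset,
        (-1 : PowerSeries ℤ) ^ (insert x Y).card *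
          Ring.inverse (growthSeries (Γ.gen '' (↑(insert x Y) : Set V))
            (Γ.parabolic (↑(insert x Y) : Set V) : Set Γ.DyerGroup)) =
        (-1 : PowerSeries ℤ) ^ Y.card *
          Ring.inverse (growthSeries (Γ.gen '' (↑Y : Set V))
            (Γ.parabolic (↑Y : Set V) : Set Γ.DyerGroup)) *
          (-Ring.inverse (1 + Γ.cyclicPart x)) := by
      intro Y hY
      have hxY : x ∉ Y := fun h => hx' (Finset.mem_powerset.1 hY h)
      rw [Finset.coe_insert, growthSeries_insert hΓ hx (by simpa using hxY),
        Ring.mul_inverse_rev, Finset.card_insert_of_notMem hxY]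
      ring
    rw [Finset.sum_congr rfl hstep, ← Finset.sum_mul, ih, Finset.coe_insert, Set.insert_union,
      growthSeries_insert hΓ hx hxs, Ring.mul_inverse_rev, Finset.prod_insert hxU]
    have h1 := Ring.mul_inverse_cancel _ hunit
    linear_combination (-(PowerSeries.X : PowerSeries ℤ) ^ m * (∏ x ∈ U, Γ.cyclicPart x) *
      Ring.inverse (growthSeries (Γ.gen '' (U ∪ Γ.V2)) (Γ.parabolic (U ∪ Γ.V2) :
          Set Γ.DyerGroup))) * h1

theorem prod_cyclicPart :
    ∏ x ∈ Finset.univ.filter (fun x => x ∉ Γ.V2), Γ.cyclicPart x =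
      (∏ x ∈ Finset.univ.filter (fun x => x ∈ Γ.Vp), Ppoly (Γ.f x).toNat) *
        (2 * PowerSeries.X * Ring.inverse (1 - (PowerSeries.X : PowerSeries ℤ))) ^
          (Finset.univ.filter (fun x => x ∈ Γ.Vinf)).card := by
  rw [← Finset.prod_filter_mul_prod_filter_not _ (fun x => x ∈ Γ.Vp), Finset.filter_filter,
    Finset.filter_filter]
  congr 1
  · refine Finset.prod_congr ?_ fun x hx => ?_
    · ext x
      simp only [Finset.mem_filter, Finset.mem_univ, true_and]
      exact ⟨fun h => h.2, fun h => ⟨fun h2 => (ne_of_gt h.1) h2, h⟩⟩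
    · have : Γ.f x ≠ ⊤ := (Finset.mem_filter.1 hx).2.2
      rw [cyclicPart, if_neg this]
  · rw [← Finset.prod_const]
    refine Finset.prod_congr ?_ fun x hx => ?_
    · ext x
      simp only [Finset.mem_filter, Finset.mem_univ, true_and]
      constructor
      · rintro ⟨h1, h2⟩
        by_contra h3
        exact h2 ⟨lt_of_le_of_ne (Γ.f_ge x) (Ne.symm h1), h3⟩
      · intro h
        have h' : Γ.f x = ⊤ := h
        refine ⟨fun h2 => ?_, fun h2 => h2.2 h⟩
        have h2' : Γ.f x = 2 := h2
        rw [h'] at h2'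
        exact absurd h2' (by simp)
    · have : Γ.f x = ⊤ := (Finset.mem_filter.1 hx).2
      rw [cyclicPart, if_pos this]

end DyerGraph

end Dyer
open PowerSeries in
/-- For a Dyer system of spherical type, with `m` the maximal length in `D_2`,
`l = |V_∞|` and `P_D(t) = t^m (∏_{x∈V_p} P_x(t)) 2^l t^l (1−t)^{−l}`, one has
`(P_D(t) + (−1)^{|V|+1}) 𝒢_{(D,V)}⁻¹ = ∑_{Y ⊊ V} (−1)^{|Y|} 𝒢_{(D_Y,Y)}⁻¹`. -/
theorem growthSeries_inv_alternating_sum_of_spherical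
    {V : Type} [Fintype V] (Γ : DyerGraph V) (h : Γ.Spherical)
    (m : ℕ)
    (hm : IsGreatest {n | ∃ g ∈ Γ.parabolic Γ.V2, wordLength (Γ.gen '' Γ.V2) g = n} m)
    (l : ℕ) (hl : l = (Finset.univ.filter (fun x => x ∈ Γ.Vinf)).card) :
    ((X : PowerSeries ℤ) ^ m *
        (∏ x ∈ Finset.univ.filter (fun x => x ∈ Γ.Vp), Ppoly (Γ.f x).toNat) *
        ((2 : PowerSeries ℤ) ^ l * (X : PowerSeries ℤ) ^ l *
          Ring.inverse ((1 - (X : PowerSeries ℤ)) ^ l)) +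
      (-1 : PowerSeries ℤ) ^ (Fintype.card V + 1)) *
      Ring.inverse (growthSeries (Set.range Γ.gen) (Set.univ : Set Γ.DyerGroup)) =
    ∑ Y ∈ (Finset.univ : Finset V).powerset.erase Finset.univ,
      (-1 : PowerSeries ℤ) ^ Y.card *
        Ring.inverse (growthSeries (Γ.gen '' (↑Y : Set V))
          (Γ.parabolic (↑Y : Set V) : Set Γ.DyerGroup)) := by
  have key := DyerGraph.sum_inverse_growthSeries_union h hm
    (Finset.univ.filter (fun x => x ∉ Γ.V2)) (fun x hx => (Finset.mem_filter.1 hx).2)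
  have hU : Finset.univ.filter (fun x => x ∉ Γ.V2) ∪ Finset.univ.filter (fun x => x ∈ Γ.V2) =
      Finset.univ := by
    ext x; simp [or_comm, em]
  have hU' : ((Finset.univ.filter (fun x => x ∉ Γ.V2) : Finset V) : Set V) ∪ Γ.V2 =
      Set.univ := by
    ext x; simp [or_comm, em]
  have hpar : Γ.parabolic Set.univ = ⊤ := by
    rw [DyerGraph.parabolic, Set.image_univ]
    exact PresentedGroup.closure_range_of Γ.rels
  have hinv : Ring.inverse ((1 - (X : PowerSeries ℤ)) ^ l) =
      Ring.inverse (1 - (X : PowerSeries ℤ)) ^ l := (Ring.inverse_pow _ _).symm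
  rw [hU, hU', DyerGraph.prod_cyclicPart, ← hl, Set.image_univ, hpar, Subgroup.coe_top] at key
  -- the term `Y = V` of the full alternating sum is the `(-1)^{|V|+1}` on the left
  rw [← Finset.add_sum_erase _ _ (Finset.mem_powerset_self _), Finset.coe_univ, Set.image_univ,
    hpar, Subgroup.coe_top, Finset.card_univ] at key
  rw [hinv, pow_succ]
  rw [mul_pow, mul_pow] at key
  linear_combination -key
end
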